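/- arXiv:2509.00302 — 3 statements merged into one kernel-verified Lean document; each statement's English description precedes it below -/
import Mathlib

section
/- Let s be an odd positive integer and q = 5^{2s}. Then for all integers t, m with 1 ≤ t < m ≤ 2⌈(q + 4·5^{s} − 25)/12⌉ − 1, there exists an optimal (4, 3)-LRC over F_q with parameters [6m, 4t + 1, 6(m−t)]_q. -/
/-- The Hamming weight of a vector: the number of nonzero coordinates. -/
def hammingWt {F : Type*} [Zero F] [DecidableEq F] {n : ℕ} (v : Fin n → F) : ℕ :=
  (Finset.univ.filter (fun i => v i ≠ 0)).card

/-- The minimum distance of the linear code `C` is at least `d`. -/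
def MinDistGe {F : Type*} [Field F] [DecidableEq F] {n : ℕ}
    (C : Submodule F (Fin n → F)) (d : ℕ) : Prop :=
  ∀ c ∈ C, c ≠ 0 → d ≤ hammingWt c

/-- The minimum distance of the linear code `C` is exactly `d`. -/
def MinDistEq {F : Type*} [Field F] [DecidableEq F] {n : ℕ}
    (C : Submodule F (Fin n → F)) (d : ℕ) : Prop :=
  MinDistGe C d ∧ ∃ c ∈ C, c ≠ 0 ∧ hammingWt c = d

/-- `C` is an `(r, δ)`-locally repairable code: every coordinate `i` has a repair
group `R` containing `i`, of size at most `r + δ - 1`, such that the punctured code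
`C|_R` has minimum distance at least `δ` (i.e. every codeword whose restriction to
`R` is nonzero has at least `δ` nonzero coordinates inside `R`). -/
def IsLRC {F : Type*} [Field F] [DecidableEq F] {n : ℕ}
    (C : Submodule F (Fin n → F)) (r δ : ℕ) : Prop :=
  ∀ i : Fin n, ∃ R : Finset (Fin n), i ∈ R ∧ R.card ≤ r + δ - 1 ∧
    ∀ c ∈ C, (∃ j ∈ R, c j ≠ 0) → δ ≤ (R.filter (fun j => c j ≠ 0)).card

/-- The parameters `[n, k, d]` attain the Singleton-type bound for `(r, δ)`-LRCs:
`d = n - k + 1 - (⌈k/r⌉ - 1)(δ - 1)`  (here `⌈k/r⌉ = (k + r - 1)/r`). -/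
def SingletonOptimal (n k d r δ : ℕ) : Prop :=
  (d : ℤ) = (n : ℤ) - (k : ℤ) + 1 - ((((k + r - 1) / r : ℕ) : ℤ) - 1) * ((δ : ℤ) - 1)

/-- There exists an optimal `(r, δ)`-LRC over `F` with parameters `[n, k, d]`. -/
def ExistsOptimalLRC (F : Type*) [Field F] [DecidableEq F] (n k d r δ : ℕ) : Prop :=
  ∃ C : Submodule F (Fin n → F),
    Module.finrank F C = k ∧ MinDistEq C d ∧ IsLRC C r δ ∧ SingletonOptimal n k d r δ


set_option linter.unusedSectionVars false

section count
variable {F : Type*} [Field F] [Fintype F] [DecidableEq F] [Algebra (ZMod 5) F]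

open Classical in
lemma card_ker_phi (φ : F →ₗ[ZMod 5] ZMod 5) (hφ : φ ≠ 0) (j : ZMod 5) :
    5 * (Finset.univ.filter (fun u : F => φ u = j)).card = Fintype.card F := by
  obtain ⟨u0, hu0⟩ : ∃ u, φ u ≠ 0 := by
    by_contra h; push Not at h; exact hφ (LinearMap.ext h)
  have hp : Fact (Nat.Prime 5) := ⟨by norm_num⟩
  have key : ∀ i : ZMod 5, (Finset.univ.filter (fun u : F => φ u = i)).card =
      (Finset.univ.filter (fun u : F => φ u = j)).card := by
    intro i
    refine Finset.card_bij' (fun u _ => u + ((j - i) / φ u0) • u0) (fun u _ => u - ((j - i) / φ u0) • u0) ?_ ?_ ?_ ?_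
    · intro u hu; simp at hu ⊢; rw [hu]; field_simp; ring
    · intro u hu; simp at hu ⊢; rw [hu]; field_simp; ring
    · intro u hu; simp
    · intro u hu; simp
  have := Finset.card_eq_sum_card_fiberwise (s := (Finset.univ : Finset F)) (t := (Finset.univ : Finset (ZMod 5))) (f := φ) (by intro x _; simp)
  rw [Finset.sum_congr rfl (fun i _ => key i)] at this
  simp only [Finset.sum_const, Finset.card_univ, ZMod.card, smul_eq_mul] at this
  exact this.symm

open Classical in
lemma card_mul_ker (φ : F →ₗ[ZMod 5] ZMod 5) (hφ : φ ≠ 0) (b : F) (hb : b ≠ 0) :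
    5 * (Finset.univ.filter (fun u : F => φ (b * u) = 0)).card = Fintype.card F := by
  rw [← card_ker_phi φ hφ 0]
  congr 1
  refine Finset.card_bij' (fun u _ => b * u) (fun u _ => b⁻¹ * u) ?_ ?_ ?_ ?_
  · intro u hu; simpa using hu
  · intro u hu; simpa [hb] using hu
  · intro u hu; simp [hb]
  · intro u hu; simp [hb]

/-- number of y with φ(a y²)=j -/
def rr (φ : F →ₗ[ZMod 5] ZMod 5) (a : F) (j : ZMod 5) : ℕ :=
  (Finset.univ.filter (fun y : F => φ (a * y ^ 2) = j)).card

lemma rr_sum (φ : F →ₗ[ZMod 5] ZMod 5) (a : F) :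
    ∑ j, rr φ a j = Fintype.card F := by
  have := Finset.card_eq_sum_card_fiberwise (s := (Finset.univ : Finset F)) (t := (Finset.univ : Finset (ZMod 5))) (f := fun y => φ (a * y ^ 2)) (by intro x _; simp)
  exact this.symm

lemma rr_scale (φ : F →ₗ[ZMod 5] ZMod 5) (a : F)
    (hsq : ∀ l : ZMod 5, ∃ z : F, z ^ 2 = algebraMap (ZMod 5) F l) (j : ZMod 5) (hj : j ≠ 0) :
    rr φ a j = rr φ a 1 := by
  have hp : Fact (Nat.Prime 5) := ⟨by norm_num⟩
  obtain ⟨z, hz⟩ := hsq j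
  have hz0 : z ≠ 0 := by
    rintro rfl
    apply hj
    apply (algebraMap (ZMod 5) F).injective
    simp [← hz]
  have h1 : ∀ y : F, φ (a * (z * y) ^ 2) = j * φ (a * y ^ 2) := by
    intro y
    rw [mul_pow, hz, show a * (algebraMap (ZMod 5) F j * y ^ 2) = j • (a * y ^ 2) by
      rw [Algebra.smul_def]; ring, map_smul, smul_eq_mul]
  symm
  refine Finset.card_bij' (fun y _ => z * y) (fun y _ => z⁻¹ * y) ?_ ?_ ?_ ?_
  · intro y hy; simp only [Finset.mem_filter, Finset.mem_univ, true_and] at hy ⊢; rw [h1, hy, mul_one]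
  · intro y hy; simp only [Finset.mem_filter, Finset.mem_univ, true_and] at hy ⊢
    have := h1 (z⁻¹ * y)
    rw [mul_inv_cancel_left₀ hz0, hy] at this
    exact mul_left_cancel₀ hj (by rw [← this, mul_one])
  · intro y hy; simp [hz0]
  · intro y hy; simp [hz0]

lemma rr_sq (φ : F →ₗ[ZMod 5] ZMod 5) (hφ : φ ≠ 0) (a : F) (ha : a ≠ 0) :
    5 * ∑ j, (rr φ a j) ^ 2 = 5 * Fintype.card F + (Fintype.card F - 1) * Fintype.card F := by
  have hp : Fact (Nat.Prime 5) := ⟨by norm_num⟩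
  have : CharP F 5 := charP_of_injective_algebraMap (algebraMap (ZMod 5) F).injective 5
  have h2 : (2 : F) ≠ 0 := by
    intro h
    have := (CharP.cast_eq_zero_iff F 5 2).1 (by exact_mod_cast h)
    omega
  -- pairs
  have e1 : ∑ j, (rr φ a j) ^ 2 =
      (Finset.univ.filter (fun p : F × F => φ (a * p.1 ^ 2) = φ (a * p.2 ^ 2))).card := by
    rw [Finset.card_eq_sum_card_fiberwise (t := (Finset.univ : Finset (ZMod 5))) (f := fun p => φ (a * p.1 ^ 2)) (by intro x _; simp)]
    refine Finset.sum_congr rfl fun j _ => ?_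
    rw [sq, rr, ← Finset.card_product]
    congr 1
    ext p
    simp only [Finset.mem_product, Finset.mem_filter, Finset.mem_univ, true_and]
    constructor
    · rintro ⟨h, h'⟩; exact ⟨h.trans h'.symm, h⟩
    · rintro ⟨h, h'⟩; exact ⟨h', h ▸ h'⟩
  have e2 : (Finset.univ.filter (fun p : F × F => φ (a * p.1 ^ 2) = φ (a * p.2 ^ 2))).card
      = (Finset.univ.filter (fun p : F × F => φ (a * p.1 * p.2) = 0)).card := by
    refine Finset.card_bij' (fun p _ => (p.1 - p.2, p.1 + p.2)) (fun p _ => ((p.1 + p.2) / 2, (p.2 - p.1) / 2)) ?_ ?_ ?_ ?_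
    · intro p hp; simp only [Finset.mem_filter, Finset.mem_univ, true_and] at hp ⊢
      rw [← sub_eq_zero, ← map_sub] at hp
      rw [← hp]; congr 1; ring
    · intro p hp; simp only [Finset.mem_filter, Finset.mem_univ, true_and] at hp ⊢
      rw [← sub_eq_zero, ← map_sub]
      rw [← hp]; congr 1; field_simp; ring
    · intro p hp; ext <;> simp <;> field_simp <;> ring
    · intro p hp; ext <;> simp <;> field_simp <;> ring
  rw [e1, e2, Finset.card_eq_sum_card_fiberwise (t := (Finset.univ : Finset F)) (f := fun p => p.1) (by intro x _; simp)]
  have e3 : ∀ u : F, (Finset.filter (fun p : F × F => p.1 = u) (Finset.univ.filter (fun p : F × F => φ (a * p.1 * p.2) = 0))).card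
     = (Finset.univ.filter (fun v : F => φ (a * u * v) = 0)).card := by
    intro u
    refine Finset.card_bij' (fun p _ => p.2) (fun v _ => (u, v)) ?_ ?_ ?_ ?_
    · intro p hp; simp at hp ⊢; rw [← hp.2]; exact hp.1
    · intro p hp; simpa using hp
    · intro p hp; simp at hp; ext <;> simp [hp.2]
    · intro p hp; rfl
  rw [Finset.sum_congr rfl (fun u _ => e3 u), ← Finset.add_sum_erase _ _ (Finset.mem_univ (0 : F)), mul_add]
  congr 1
  · simp
  · rw [Finset.mul_sum, Finset.sum_congr rfl (fun u hu => card_mul_ker φ hφ (a * u) (mul_ne_zero ha (Finset.ne_of_mem_erase hu)))]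
    simp

lemma rr_avg (φ : F →ₗ[ZMod 5] ZMod 5) (hφ : φ ≠ 0) :
    5 * ∑ a ∈ Finset.univ.erase (0 : F), rr φ a 0 = (Fintype.card F - 1) * Fintype.card F := by
  have e0 : ∀ y : F, 5 * ((Finset.univ.erase (0 : F)).filter (fun a => φ (a * y ^ 2) = 0)).card
      = if y = 0 then 5 * (Fintype.card F - 1) else Fintype.card F - 5 := by
    intro y
    split_ifs with h
    · subst h; simp
    · have := card_mul_ker φ hφ (y ^ 2) (pow_ne_zero 2 h)
      have h2 : (Finset.univ.erase (0 : F)).filter (fun a => φ (a * y ^ 2) = 0) =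
          (Finset.univ.filter (fun u : F => φ (y ^ 2 * u) = 0)).erase 0 := by
        ext a; simp [mul_comm]
      rw [h2, Finset.card_erase_of_mem (by simp), Nat.mul_sub, this]
  have hcard := card_ker_phi φ hφ 0
  have hpos : 0 < (Finset.univ.filter (fun u : F => φ u = 0)).card :=
    Finset.card_pos.2 ⟨0, by simp⟩
  have hsum : ∑ a ∈ Finset.univ.erase (0 : F), rr φ a 0 =
      ∑ y : F, ((Finset.univ.erase (0 : F)).filter (fun a => φ (a * y ^ 2) = 0)).card := by
    simp only [rr, Finset.card_filter]
    rw [Finset.sum_comm]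
  rw [hsum, Finset.mul_sum, Finset.sum_congr rfl (fun y _ => e0 y), ← Finset.add_sum_erase _ _ (Finset.mem_univ (0 : F))]
  rw [Finset.sum_congr rfl (fun y hy => if_neg (Finset.ne_of_mem_erase hy))]
  simp only [if_true, Finset.sum_const, smul_eq_mul]
  rw [Finset.card_erase_of_mem (Finset.mem_univ _), Finset.card_univ]
  have : 5 ≤ Fintype.card F := by omega
  generalize Fintype.card F = q at *
  obtain ⟨q, rfl⟩ := Nat.exists_eq_add_of_le this
  simp
  ring

lemma exists_good (φ : F →ₗ[ZMod 5] ZMod 5) (hφ : φ ≠ 0)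
    (hsq : ∀ l : ZMod 5, ∃ z : F, z ^ 2 = algebraMap (ZMod 5) F l) (P : ℕ) (hP : 0 < P)
    (hq : Fintype.card F = 25 * P ^ 2) :
    ∃ a : F, a ≠ 0 ∧ rr φ a 0 = 5 * P ^ 2 + 4 * P := by
  have hp : Fact (Nat.Prime 5) := ⟨by norm_num⟩
  have h25 : 1 ≤ 25 * P ^ 2 := by have := pow_pos hP 2; omega
  have hval : ∀ a : F, a ≠ 0 → (rr φ a 0 : ℤ) = 5 * P ^ 2 + 4 * P ∨ (rr φ a 0 : ℤ) = 5 * P ^ 2 - 4 * P := by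
    intro a ha
    have s1 := rr_sum φ a
    have s2 := rr_sq φ hφ a ha
    rw [← Finset.add_sum_erase _ _ (Finset.mem_univ (0 : ZMod 5))] at s1 s2
    rw [Finset.sum_congr rfl (fun j hj => rr_scale φ a hsq j (Finset.ne_of_mem_erase hj))] at s1
    rw [Finset.sum_congr rfl (fun j hj => by rw [rr_scale φ a hsq j (Finset.ne_of_mem_erase hj)])] at s2
    simp [hq, ZMod.card] at s1 s2
    zify [h25] at s1 s2
    generalize (rr φ a 0 : ℤ) = x at *
    generalize (rr φ a 1 : ℤ) = y at *
    have hx : x = 25 * P ^ 2 - 4 * y := by linarith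
    subst hx
    have : (5 * (P : ℤ) ^ 2 - y - P) * (5 * P ^ 2 - y + P) = 0 := by nlinarith
    rcases mul_eq_zero.1 this with h | h
    · left; linarith
    · right; linarith
  by_contra hcon
  push Not at hcon
  have hval' : ∀ a ∈ Finset.univ.erase (0 : F), (rr φ a 0 : ℤ) = 5 * P ^ 2 - 4 * P := by
    intro a ha
    have ha := Finset.ne_of_mem_erase ha
    rcases hval a ha with h | h
    · exact absurd (by exact_mod_cast h) (hcon a ha)
    · exact h
  have s3 := rr_avg φ hφ
  rw [hq] at s3
  zify [h25] at s3
  rw [Finset.sum_congr rfl hval'] at s3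
  simp only [Finset.sum_const, nsmul_eq_mul] at s3
  rw [Finset.card_erase_of_mem (Finset.mem_univ _), Finset.card_univ, hq] at s3
  push_cast [h25] at s3
  have hP' : (1 : ℤ) ≤ P := by exact_mod_cast hP
  have : (25 * (P : ℤ) ^ 2 - 1) * P = 0 := by linarith
  rcases mul_eq_zero.1 this with h | h
  · nlinarith
  · omega
end count

section curve
variable {F : Type*} [Field F] [Fintype F] [DecidableEq F] [Algebra (ZMod 5) F]

lemma exists_phi [CharP F 5] : ∃ φ : F →ₗ[ZMod 5] ZMod 5, φ ≠ 0 ∧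
    ∀ u, φ u = 0 → 5 ≤ (Finset.univ.filter (fun x : F => x ^ 5 - x = u)).card := by
  have hp : Fact (Nat.Prime 5) := ⟨by norm_num⟩
  let W : F →ₗ[ZMod 5] F :=
    { toFun := fun x => x ^ 5 - x
      map_add' := by intro x y; rw [add_pow_char]; ring
      map_smul' := by
        intro l x
        simp only [Algebra.smul_def, RingHom.id_apply, mul_pow, ← map_pow, ZMod.pow_card]
        ring }
  have hWa : ∀ x, W x = x ^ 5 - x := fun _ => rfl
  have hWalg : ∀ l : ZMod 5, W (algebraMap (ZMod 5) F l) = 0 := by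
    intro l; rw [hWa, ← map_pow, ZMod.pow_card, sub_self]
  have hninj : ¬ Function.Injective W := by
    intro h
    have := h ((hWalg 1).trans (hWalg 0).symm)
    simp at this
  have hlt : LinearMap.range W < ⊤ := by
    rw [lt_top_iff_ne_top]
    intro h
    exact hninj (Finite.injective_iff_surjective.2 (LinearMap.range_eq_top.1 h))
  obtain ⟨φ, hφ, hle⟩ := Submodule.exists_le_ker_of_lt_top _ hlt
  refine ⟨φ, hφ, ?_⟩
  have hfib : ∀ x0 : F, 5 ≤ (Finset.univ.filter (fun x : F => x ^ 5 - x = W x0)).card := by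
    intro x0
    have : (Finset.univ.image (fun l : ZMod 5 => x0 + algebraMap (ZMod 5) F l)).card = 5 := by
      rw [Finset.card_image_of_injective]
      · simp [ZMod.card]
      · intro l l' h; exact (algebraMap (ZMod 5) F).injective (add_left_cancel h)
    refine this.symm.le.trans ?_
    apply Finset.card_le_card
    intro x hx
    simp only [Finset.mem_image, Finset.mem_univ, true_and] at hx
    obtain ⟨l, rfl⟩ := hx
    simp only [Finset.mem_filter, Finset.mem_univ, true_and]
    rw [← hWa, map_add, hWalg, add_zero]
  have hfibU : ∀ u : F, (Finset.univ.filter (fun x : F => W x = u)).card ≤ 5 := by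
    intro u
    have hne : (Polynomial.X ^ 5 - Polynomial.X - Polynomial.C u : Polynomial F).natDegree = 5 := by
      compute_degree!
    have h0 : (Polynomial.X ^ 5 - Polynomial.X - Polynomial.C u : Polynomial F) ≠ 0 := by
      intro h; rw [h] at hne; simp at hne
    calc _ ≤ (Polynomial.X ^ 5 - Polynomial.X - Polynomial.C u : Polynomial F).roots.toFinset.card := by
          apply Finset.card_le_card
          intro x hx
          simp only [Finset.mem_filter, Finset.mem_univ, true_and, hWa] at hx
          simp [h0, hx]
      _ ≤ _ := Multiset.toFinset_card_le _
      _ ≤ _ := Polynomial.card_roots' _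
      _ = 5 := hne
  have hcard : Fintype.card F ≤ 5 * (Finset.univ.image W).card := by
    refine Finset.card_le_mul_card_image (s := (Finset.univ : Finset F)) 5 ?_
    intro u _
    exact hfibU u
  have hk := card_ker_phi φ hφ 0
  have himg : Finset.univ.image W = Finset.univ.filter (fun u : F => φ u = 0) := by
    apply Finset.eq_of_subset_of_card_le
    · intro u hu
      simp only [Finset.mem_image, Finset.mem_univ, true_and] at hu
      obtain ⟨x, rfl⟩ := hu
      simp only [Finset.mem_filter, Finset.mem_univ, true_and]
      exact hle ⟨x, rfl⟩
    · have : (Finset.univ.filter (fun u : F => φ u = 0)).card = (Finset.filter (fun u : F => φ u = 0) Finset.univ).card := rfl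
      have hk' : 5 * (Finset.filter (fun u : F => φ u = 0) Finset.univ).card = Fintype.card F := by
        convert hk
      omega
  intro u hu
  have : u ∈ Finset.univ.image W := by rw [himg]; simp [hu]
  simp only [Finset.mem_image, Finset.mem_univ, true_and] at this
  obtain ⟨x0, rfl⟩ := this
  exact hfib x0

lemma zmod5_cases : ∀ l : ZMod 5, l = 0 ∨ l = 1 ∨ l = -1 ∨ l = 2 ∨ l = -2 := by decide

lemma curve_count [CharP F 5] (P : ℕ) (hP : 0 < P) (hq : Fintype.card F = 25 * P ^ 2)
    (θ : F) (hθ : θ ^ 24 = 1) (hθ4 : θ ^ 4 ≠ 1) (hθ12 : θ ^ 12 = -1) :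
    ∃ c : F, c ≠ 0 ∧ 25 * P ^ 2 + 20 * P ≤
      (Finset.univ.filter (fun p : F × F => p.1 ≠ 0 ∧ p.2 ^ 2 = c * (p.1 ^ 6 - 1))).card + 4 := by
  have hp : Fact (Nat.Prime 5) := ⟨by norm_num⟩
  obtain ⟨φ, hφ, hfib⟩ := exists_phi (F := F)
  have h5 : (5 : F) = 0 := by exact_mod_cast CharP.cast_eq_zero F 5
  have hsq : ∀ l : ZMod 5, ∃ z : F, z ^ 2 = algebraMap (ZMod 5) F l := by
    have h1 : ∀ l : ZMod 5, l = 0 ∨ l = 1 ∨ l = -1 ∨ l = 2 ∨ l = -2 := zmod5_cases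
    have h6 : (θ ^ 6 - 2) * (θ ^ 6 + 2) = 0 := by linear_combination hθ12 - h5
    intro l
    have t0 : ∃ z : F, z ^ 2 = -1 := ⟨θ ^ 6, by linear_combination hθ12⟩
    have t2 : ∃ z : F, z ^ 2 = 2 := by
      rcases mul_eq_zero.1 h6 with h | h
      · exact ⟨θ ^ 3, by linear_combination h⟩
      · exact ⟨θ ^ 3 * θ ^ 6, by linear_combination θ ^ 12 * h - 2 * hθ12⟩
    have t3 : algebraMap (ZMod 5) F 2 = 2 := map_ofNat _ 2
    obtain ⟨i, hi⟩ := t0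
    obtain ⟨w, hw⟩ := t2
    rcases h1 l with rfl | rfl | rfl | rfl | rfl
    · exact ⟨0, by simp⟩
    · exact ⟨1, by simp⟩
    · exact ⟨i, by simp [hi]⟩
    · exact ⟨w, by simp [hw, t3]⟩
    · exact ⟨i * w, by simp [mul_pow, hw, hi, t3]⟩
  obtain ⟨a, ha, hra⟩ := exists_good φ hφ hsq P hP hq
  have hθ0 : θ ≠ 0 := by rintro rfl; simp at hθ
  set D := θ ^ 5 - θ with hD
  have hθ25 : θ ^ 25 = θ := by linear_combination θ * hθ
  have hD0 : D ≠ 0 := by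
    intro h
    apply hθ4
    apply mul_left_cancel₀ hθ0
    linear_combination h
  refine ⟨D / a, div_ne_zero hD0 ha, ?_⟩
  -- affine points of x^5 - x = a v^2
  let S : Finset (F × F) := Finset.univ.filter (fun p => p.1 ^ 5 - p.1 = a * p.2 ^ 2)
  have hS : 25 * P ^ 2 + 20 * P ≤ S.card := by
    have : ∑ v ∈ Finset.univ.filter (fun y : F => φ (a * y ^ 2) = 0),
        (Finset.univ.filter (fun x : F => x ^ 5 - x = a * v ^ 2)).card ≤ S.card := by
      rw [← Finset.card_sigma]
      refine Finset.card_le_card_of_injOn (fun x => (x.2, x.1)) ?_ ?_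
      · intro x hx
        simp at hx
        simp [S, hx.2]
      · rintro ⟨x, y⟩ hx ⟨x', y'⟩ hx' h
        simp at h
        simp [h]
    refine le_trans ?_ this
    calc _ = ∑ v ∈ Finset.univ.filter (fun y : F => φ (a * y ^ 2) = 0), 5 := by
          rw [Finset.sum_const]
          change _ = rr φ a 0 • 5
          rw [hra, smul_eq_mul]; ring
      _ ≤ _ := by
          apply Finset.sum_le_sum
          intro v hv
          apply hfib
          simpa using hv
  let T : Finset (F × F) := S.filter (fun p => p.1 ≠ θ ∧ p.1 ≠ θ ^ 5)
  have hT : S.card ≤ T.card + 4 := by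
    rw [← Finset.card_filter_add_card_filter_not (s := S) (fun p => p.1 ≠ θ ∧ p.1 ≠ θ ^ 5)]
    apply Nat.add_le_add_left
    have hsqc : ∀ b : F, (Finset.univ.filter (fun v : F => b = a * v ^ 2)).card ≤ 2 := by
      intro b
      have h0 : (Polynomial.C a * Polynomial.X ^ 2 - Polynomial.C b : Polynomial F).natDegree = 2 := by
        compute_degree!
      have h1 : (Polynomial.C a * Polynomial.X ^ 2 - Polynomial.C b : Polynomial F) ≠ 0 := by
        intro h; rw [h] at h0; simp at h0
      calc _ ≤ (Polynomial.C a * Polynomial.X ^ 2 - Polynomial.C b : Polynomial F).roots.toFinset.card := by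
            apply Finset.card_le_card
            intro x hx
            simp only [Finset.mem_filter, Finset.mem_univ, true_and] at hx
            simp only [Multiset.mem_toFinset, Polynomial.mem_roots h1]
            simp [hx]
        _ ≤ _ := Multiset.toFinset_card_le _
        _ ≤ _ := Polynomial.card_roots' _
        _ = 2 := h0
    have hsub : S.filter (fun p => ¬ (p.1 ≠ θ ∧ p.1 ≠ θ ^ 5)) ⊆
        ((Finset.univ.filter (fun v : F => θ ^ 5 - θ = a * v ^ 2)).image (fun v => (θ, v))) ∪
        ((Finset.univ.filter (fun v : F => (θ ^ 5) ^ 5 - θ ^ 5 = a * v ^ 2)).image (fun v => (θ ^ 5, v))) := by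
      rintro ⟨x, v⟩ hx
      simp only [S, Finset.mem_filter, Finset.mem_univ, true_and] at hx
      simp only [Finset.mem_union, Finset.mem_image, Finset.mem_filter, Finset.mem_univ, true_and]
      obtain ⟨h, h'⟩ := hx
      by_cases hxθ : x = θ
      · left; subst hxθ; exact ⟨v, h, rfl⟩
      · have : x = θ ^ 5 := by tauto
        right; subst this; exact ⟨v, h, rfl⟩
    refine (Finset.card_le_card hsub).trans ((Finset.card_union_le _ _).trans ?_)
    have i1 := (Finset.card_image_le (s := (Finset.univ.filter (fun v : F => θ ^ 5 - θ = a * v ^ 2))) (f := fun v => (θ, v))).trans (hsqc _)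
    have i2 := (Finset.card_image_le (s := (Finset.univ.filter (fun v : F => (θ ^ 5) ^ 5 - θ ^ 5 = a * v ^ 2))) (f := fun v => (θ ^ 5, v))).trans (hsqc _)
    omega
  refine hS.trans (hT.trans (Nat.add_le_add_right ?_ 4))
  refine Finset.card_le_card_of_injOn
    (fun p => ((p.1 - θ ^ 5) / (θ - p.1), p.2 * (-D / (θ - p.1)) ^ 3)) ?_ ?_
  · rintro ⟨x, v⟩ hx
    simp only [T, S, Finset.coe_filter, Finset.mem_filter, Finset.mem_univ, true_and, Set.mem_ofPred_eq] at hx ⊢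
    obtain ⟨h, h1, h2⟩ := hx
    have hne : θ - x ≠ 0 := sub_ne_zero.2 (Ne.symm h1)
    refine ⟨div_ne_zero (sub_ne_zero.2 h2) hne, ?_⟩
    have key : (x - θ ^ 5) ^ 6 - (θ - x) ^ 6 = D ^ 5 * (x ^ 5 - x) := by
      have hc : (x - θ ^ 5) ^ 5 = x ^ 5 - θ := by
        rw [sub_pow_char]; linear_combination -hθ25
      have hc' : (θ - x) ^ 5 = θ ^ 5 - x ^ 5 := by rw [sub_pow_char]
      have hd : D ^ 5 = θ - θ ^ 5 := by rw [hD, sub_pow_char]; linear_combination hθ25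
      rw [pow_succ (x - θ ^ 5), pow_succ (θ - x), hc, hc', hd]
      ring
    have e1 : (v * (-D / (θ - x)) ^ 3) ^ 2 = v ^ 2 * D ^ 6 / (θ - x) ^ 6 := by
      field_simp
    have e2 : ((x - θ ^ 5) / (θ - x)) ^ 6 - 1 = D ^ 5 * (a * v ^ 2) / (θ - x) ^ 6 := by
      rw [← h, ← key]; field_simp
    rw [e1, e2]; field_simp
  · rintro ⟨x, v⟩ hx ⟨x', v'⟩ hx' h
    simp only [T, S, Finset.coe_filter, Finset.mem_filter, Finset.mem_univ, true_and, Set.mem_ofPred_eq] at hx hx'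
    simp only [Prod.mk.injEq] at h ⊢
    obtain ⟨-, h1, h2⟩ := hx
    obtain ⟨-, h1', h2'⟩ := hx'
    have hne : θ - x ≠ 0 := sub_ne_zero.2 (Ne.symm h1)
    have hne' : θ - x' ≠ 0 := sub_ne_zero.2 (Ne.symm h1')
    have hxx : x = x' := by
      have := h.1
      rw [div_eq_div_iff hne hne'] at this
      have h3 : D * (x - x') = 0 := by rw [hD]; linear_combination -this
      rcases mul_eq_zero.1 h3 with h4 | h4
      · exact absurd h4 hD0
      · exact sub_eq_zero.1 h4
    subst hxx
    refine ⟨rfl, ?_⟩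
    have := h.2
    exact mul_right_cancel₀ (pow_ne_zero 3 (div_ne_zero (neg_ne_zero.2 hD0) hne)) this
end curve

section poly
open Polynomial
variable {F : Type*} [Field F] [Fintype F] [DecidableEq F]

lemma zeros_bound (A B g : F[X]) (hN : A ^ 2 - g * B ^ 2 ≠ 0) (Z : Finset (F × F))
    (hZ : ∀ p ∈ Z, p.2 ^ 2 = g.eval p.1 ∧ A.eval p.1 + B.eval p.1 * p.2 = 0) :
    Z.card ≤ (A ^ 2 - g * B ^ 2).natDegree := by
  set N := A ^ 2 - g * B ^ 2 with hNdef
  rw [Finset.card_eq_sum_card_fiberwise (t := (Finset.univ : Finset F)) (f := fun p => p.1) (by intro x _; simp)]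
  refine le_trans ?_ (Polynomial.card_roots' N)
  have : N.roots.card = ∑ x : F, N.roots.count x :=
    (Multiset.sum_count_eq_card (s := Finset.univ) (by simp)).symm
  rw [this]
  refine Finset.sum_le_sum fun x _ => ?_
  rw [Polynomial.count_roots]
  set Zx := Z.filter (fun p => p.1 = x) with hZx
  have hmem : ∀ p ∈ Zx, p.1 = x ∧ p.2 ^ 2 = g.eval x ∧ A.eval x + B.eval x * p.2 = 0 := by
    intro p hp
    rw [hZx, Finset.mem_filter] at hp
    obtain ⟨h1, h2⟩ := hp
    have := hZ p h1
    rw [h2] at this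
    exact ⟨h2, this⟩
  by_cases h1 : Zx.card ≤ 1
  · by_cases h0 : Zx.card = 0
    · omega
    · obtain ⟨p, hp⟩ := Finset.card_pos.1 (Nat.pos_of_ne_zero h0)
      obtain ⟨-, h2, h3⟩ := hmem p hp
      refine h1.trans ((Polynomial.rootMultiplicity_pos hN).2 ?_)
      simp only [IsRoot.def, hNdef, eval_sub, eval_mul, eval_pow, ← h2]
      linear_combination (A.eval x - B.eval x * p.2) * h3
  · obtain ⟨p, hp, p', hp', hne⟩ := Finset.one_lt_card.1 (not_le.1 h1)
    obtain ⟨a1, a2, a3⟩ := hmem p hp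
    obtain ⟨b1, b2, b3⟩ := hmem p' hp'
    have hy : p.2 ≠ p'.2 := fun h => hne (Prod.ext (a1.trans b1.symm) h)
    have hB : B.eval x = 0 := by
      have : B.eval x * (p.2 - p'.2) = 0 := by linear_combination a3 - b3
      rcases mul_eq_zero.1 this with h | h
      · exact h
      · exact absurd (sub_eq_zero.1 h) hy
    have hA : A.eval x = 0 := by rw [hB] at a3; simpa using a3
    have h2 : 2 ≤ rootMultiplicity x N := by
      rw [Polynomial.le_rootMultiplicity_iff hN]
      have dA : X - C x ∣ A := dvd_iff_isRoot.2 hA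
      have dB : X - C x ∣ B := dvd_iff_isRoot.2 hB
      exact dvd_sub (pow_dvd_pow_of_dvd dA 2) (Dvd.dvd.mul_left (pow_dvd_pow_of_dvd dB 2) g)
    refine le_trans ?_ h2
    -- card ≤ 2
    have hsub : Zx ⊆ {(x, p.2), (x, -p.2)} := by
      intro r hr
      obtain ⟨c1, c2, -⟩ := hmem r hr
      simp only [Finset.mem_insert, Finset.mem_singleton]
      rcases sq_eq_sq_iff_eq_or_eq_neg.1 (c2.trans a2.symm) with h | h
      · left; exact Prod.ext c1 h
      · right; exact Prod.ext c1 h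
    exact (Finset.card_le_card hsub).trans Finset.card_le_two

lemma norm_ne_zero (A B g : F[X]) (hg : rootMultiplicity 1 g = 1) (hAB : A ≠ 0 ∨ B ≠ 0) :
    A ^ 2 - g * B ^ 2 ≠ 0 := by
  intro h
  have h : A ^ 2 = g * B ^ 2 := sub_eq_zero.1 h
  have hg0 : g ≠ 0 := by rintro rfl; simp at hg
  have hB : B ≠ 0 := by
    rintro rfl
    simp at h
    simp [h] at hAB
  have hA : A ≠ 0 := by
    rintro rfl
    simp [hg0, hB] at h
  have := congrArg (rootMultiplicity 1) h
  rw [rootMultiplicity_mul (mul_ne_zero hg0 (pow_ne_zero 2 hB)), hg, sq, sq,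
    rootMultiplicity_mul (mul_ne_zero hA hA), rootMultiplicity_mul (mul_ne_zero hB hB)] at this
  omega

lemma comb_zero (c : F) (hc : c ≠ 0) (a : Fin 4 → F[X])
    (h : ∑ i : Fin 4, X ^ (i : ℕ) * (a i).comp (C c * (X ^ 6 - 1)) = 0) (i : Fin 4) : a i = 0 := by
  have e : ∀ i, (a i).comp (C c * (X ^ 6 - 1)) = expand F 6 ((a i).comp (C c * (X - 1))) := by
    intro i
    rw [expand_eq_comp_X_pow, comp_assoc]
    simp
  have h2 : (a i).comp (C c * (X - 1)) = 0 := by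
    ext n
    have := congrArg (fun p => coeff p (6 * n + i)) h
    simp only [e, finsetSum_coeff, coeff_zero] at this
    rw [Finset.sum_eq_single i] at this
    · rw [add_comm, add_comm, coeff_X_pow_mul, coeff_expand_mul' (by norm_num)] at this
      simpa using this
    · intro j _ hj
      rw [coeff_X_pow_mul', coeff_expand (by norm_num)]
      have : (j : ℕ) ≠ i := fun h => hj (Fin.ext h)
      split_ifs with h1 h2
      · omega
      · rfl
      · rfl
    · simp
  have h3 : ((a i).comp (C c * (X - 1))).comp (C c⁻¹ * X + 1) = a i := by
    rw [comp_assoc]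
    simp [← mul_assoc, ← C_mul, hc]
  rw [← h3, h2, zero_comp]

lemma even_odd (p : F[X]) : p = expand F 2 (contract 2 p) + X * expand F 2 (contract 2 (divX p)) := by
  ext n
  rcases n with _ | n
  · simp [coeff_expand, coeff_contract]
  · rw [coeff_add, coeff_X_mul, coeff_expand (by norm_num), coeff_expand (by norm_num)]
    rcases Nat.even_or_odd n with ⟨k, hk⟩ | ⟨k, hk⟩
    · rw [if_neg (by omega), if_pos (by omega), coeff_contract (by norm_num), coeff_divX, zero_add]
      congr 1; omega
    · rw [if_pos (by omega), if_neg (by omega), coeff_contract (by norm_num), add_zero]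
      congr 1; omega

lemma comb_deg (a : Fin 4 → F[X]) (g : F[X]) (hg : g.natDegree ≤ 6) (d : ℕ)
    (h : ∀ i n, (a i).coeff n ≠ 0 → (i : ℕ) + 6 * n ≤ d) :
    (∑ i : Fin 4, X ^ (i : ℕ) * (a i).comp g).natDegree ≤ d := by
  apply natDegree_sum_le_of_forall_le
  intro i _
  by_cases h0 : a i = 0
  · simp [h0]
  · have h1 := h i (a i).natDegree (by simpa using h0)
    refine natDegree_mul_le.trans ?_
    rw [natDegree_X_pow, natDegree_comp]
    have := Nat.mul_le_mul_left (a i).natDegree hg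
    omega

lemma main_zeros (hF6 : (6 : F) ≠ 0) (c : F) (hc : c ≠ 0) (t : ℕ) (ht : 1 ≤ t) (p : Fin 4 → F[X])
    (hdeg : ∀ i n, (p i).coeff n ≠ 0 → (i : ℕ) + 3 * n ≤ 3 * t) (hp : p ≠ 0)
    (Z : Finset (F × F)) (hZ : ∀ z ∈ Z, z.2 ^ 2 = c * (z.1 ^ 6 - 1) ∧
      ∑ i : Fin 4, z.1 ^ (i : ℕ) * (p i).eval z.2 = 0) : Z.card ≤ 6 * t := by
  set g : F[X] := C c * (X ^ 6 - 1) with hgdef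
  have hgd : g.natDegree ≤ 6 := by rw [hgdef]; compute_degree
  set A := ∑ i : Fin 4, X ^ (i : ℕ) * (contract 2 (p i)).comp g with hA
  set B := ∑ i : Fin 4, X ^ (i : ℕ) * (contract 2 (divX (p i))).comp g with hB
  have hgm : rootMultiplicity 1 g = 1 := by
    have hg0 : g ≠ 0 := by
      intro h
      have := congrArg (eval 0) h
      simp [hgdef, hc] at this
    apply le_antisymm
    · by_contra hlt
      have h2 : 1 < rootMultiplicity 1 g := by omega
      rw [one_lt_rootMultiplicity_iff_isRoot hg0] at h2
      have := h2.2
      simp [hgdef, hc] at this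
      exact hF6 (by linear_combination this)
    · exact (rootMultiplicity_pos hg0).2 (by simp [hgdef])
  have hAB : A ≠ 0 ∨ B ≠ 0 := by
    by_contra hcon
    push Not at hcon
    apply hp
    funext i
    have a0 := comb_zero c hc (fun i => contract 2 (p i)) hcon.1 i
    have b0 := comb_zero c hc (fun i => contract 2 (divX (p i))) hcon.2 i
    rw [even_odd (p i), a0, b0]
    simp
  have hdA : A.natDegree ≤ 3 * t := by
    apply comb_deg _ _ hgd
    intro i n hn
    rw [coeff_contract (by norm_num)] at hn
    have := hdeg i _ hn
    omega
  have hdB : B.natDegree ≤ 3 * t - 3 := by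
    apply comb_deg _ _ hgd
    intro i n hn
    rw [coeff_contract (by norm_num), coeff_divX] at hn
    have := hdeg i _ hn
    omega
  refine (zeros_bound A B g (norm_ne_zero A B g hgm hAB) Z ?_).trans ?_
  · intro z hz
    obtain ⟨h1, h2⟩ := hZ z hz
    have hgz : g.eval z.1 = z.2 ^ 2 := by rw [h1]; simp [hgdef]
    refine ⟨hgz.symm, ?_⟩
    rw [← h2, hA, hB, eval_finsetSum, eval_finsetSum, Finset.sum_mul, ← Finset.sum_add_distrib]
    refine Finset.sum_congr rfl fun i _ => ?_
    conv_rhs => rw [even_odd (p i)]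
    simp only [eval_mul, eval_pow, eval_X, eval_comp, eval_add, expand_eval, hgz]
    ring
  · refine (natDegree_sub_le _ _).trans (max_le ?_ ?_)
    · refine natDegree_pow_le.trans ?_
      omega
    · refine natDegree_mul_le.trans ?_
      have : (B ^ 2).natDegree ≤ 2 * B.natDegree := natDegree_pow_le
      omega
end poly

section code
open Polynomial
variable {F : Type*} [Field F] [Fintype F] [DecidableEq F]

/-- degree bounds of the four coefficient polynomials -/
def dgB (t : ℕ) (i : Fin 4) : ℕ := if i = 0 then t + 1 else t

/-- the evaluation map -/
noncomputable def evMap (t n : ℕ) (x y : Fin n → F) :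
    ((i : Fin 4) → degreeLT F (dgB t i)) →ₗ[F] (Fin n → F) where
  toFun p := fun j => ∑ i : Fin 4, x j ^ (i : ℕ) * ((p i : F[X])).eval (y j)
  map_add' p p' := by
    funext j
    simp [mul_add, Finset.sum_add_distrib]
  map_smul' l p := by
    funext j
    simp only [Pi.smul_apply, Submodule.coe_smul, eval_smul, smul_eq_mul, RingHom.id_apply, Finset.mul_sum]
    refine Finset.sum_congr rfl fun i _ => by ring

lemma wt_add (n : ℕ) (v : Fin n → F) :
    (Finset.univ.filter (fun i => v i = 0)).card + hammingWt v = n := by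
  have := Finset.card_filter_add_card_filter_not (s := (Finset.univ : Finset (Fin n))) (fun i => v i = 0)
  simpa [hammingWt] using this

lemma code_exists (hF6 : (6 : F) ≠ 0) (c : F) (hc : c ≠ 0) (t m : ℕ) (ht : 1 ≤ t) (htm : t < m)
    (ζ : F) (hζ : Function.Injective (fun k : Fin 6 => ζ ^ (k : ℕ))) (hζ6 : ζ ^ 6 = 1)
    (w yv : Fin m → F) (hw : ∀ j, w j ≠ 0) (hy : Function.Injective yv)
    (hcurve : ∀ j, yv j ^ 2 = c * (w j ^ 6 - 1)) :
    ExistsOptimalLRC F (6 * m) (4 * t + 1) (6 * (m - t)) 4 3 := by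
  let e : Fin (6 * m) ≃ Fin 6 × Fin m := finProdFinEquiv.symm
  let x : Fin (6 * m) → F := fun j => ζ ^ ((e j).1 : ℕ) * w (e j).2
  let y : Fin (6 * m) → F := fun j => yv (e j).2
  have hinj : ∀ j j', x j = x j' → y j = y j' → j = j' := by
    intro j j' h1 h2
    have h3 : (e j).2 = (e j').2 := hy h2
    simp only [x, h3] at h1
    have h4 : (e j).1 = (e j').1 := hζ (mul_right_cancel₀ (hw _) h1)
    exact e.injective (Prod.ext h4 h3)
  have hcur : ∀ j, y j ^ 2 = c * (x j ^ 6 - 1) := by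
    intro j
    simp only [x, y, hcurve]
    rw [mul_pow, ← pow_mul, mul_comm _ 6, pow_mul, hζ6, one_pow, one_mul]
  let ev := evMap t (6 * m) x y
  have hevd : ∀ p j, ev p j = ∑ i : Fin 4, x j ^ (i : ℕ) * ((p i : F[X])).eval (y j) := fun _ _ => rfl
  have hz : ∀ p, p ≠ 0 → (Finset.univ.filter (fun i => ev p i = 0)).card ≤ 6 * t := by
    intro p hp
    rw [← Finset.card_image_of_injOn (f := fun j => (x j, y j))]
    · apply main_zeros hF6 c hc t ht (fun i => (p i : F[X]))
      · intro i n hn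
        have hd := mem_degreeLT.1 (p i).2
        have hn' : n < dgB t i := by
          by_contra hle
          apply hn
          apply coeff_eq_zero_of_degree_lt
          exact lt_of_lt_of_le hd (by exact_mod_cast not_lt.1 hle)
        unfold dgB at hn'
        split_ifs at hn' with h0
        · subst h0; simp; omega
        · omega
      · intro h
        apply hp
        funext i
        exact Subtype.ext (congrFun h i)
      · intro z hz
        simp only [Finset.mem_image, Finset.mem_filter, Finset.mem_univ, true_and] at hz
        obtain ⟨j, hj, rfl⟩ := hz
        exact ⟨hcur j, hj⟩
    · intro j _ j' _ h
      simp only [Prod.mk.injEq] at h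
      exact hinj j j' h.1 h.2
  have hwt : ∀ p, p ≠ 0 → 6 * (m - t) ≤ hammingWt (ev p) := by
    intro p hp
    have h1 := hz p hp
    have h2 := wt_add (6 * m) (ev p)
    omega
  have hevinj : Function.Injective ev := by
    rw [← LinearMap.ker_eq_bot, LinearMap.ker_eq_bot']
    intro p hp
    by_contra h
    have h1 := hwt p h
    rw [hp] at h1
    simp [hammingWt] at h1
    omega
  refine ⟨LinearMap.range ev, ?_, ⟨?_, ?_⟩, ?_, ?_⟩
  · rw [LinearMap.finrank_range_of_inj hevinj, Module.finrank_pi_fintype]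
    have : ∀ n, Module.finrank F (degreeLT F n) = n := by
      intro n
      rw [(degreeLTEquiv F n).finrank_eq]; simp
    simp only [this]
    simp [Fin.sum_univ_succ, dgB]
    omega
  · rintro _ ⟨p, rfl⟩ h
    apply hwt
    rintro rfl
    simp at h
  · let p0 : F[X] := ∏ j ∈ Finset.univ.filter (fun j : Fin m => (j : ℕ) < t), (X - C (yv j))
    have hcardt : (Finset.univ.filter (fun j : Fin m => (j : ℕ) < t)).card = t := by
      rw [Fin.card_filter_val_lt]; omega
    have hp0 : p0 ∈ degreeLT F (dgB t 0) := by
      rw [mem_degreeLT]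
      have : p0.natDegree = t := by
        rw [natDegree_prod_of_monic _ _ (fun j _ => monic_X_sub_C _)]
        simp [hcardt]
      refine lt_of_le_of_lt degree_le_natDegree ?_
      rw [this]
      simp only [dgB, if_true]
      exact_mod_cast Nat.lt_succ_self t
    have hp00 : p0 ≠ 0 := (monic_prod_of_monic _ _ (fun j _ => monic_X_sub_C _)).ne_zero
    let p : (i : Fin 4) → degreeLT F (dgB t i) := Pi.single 0 ⟨p0, hp0⟩
    have hp : p ≠ 0 := by
      intro h
      have := congrFun h 0
      simp [p] at this
      exact hp00 this
    have hevp : ∀ j, ev p j = p0.eval (y j) := by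
      intro j
      rw [hevd, Finset.sum_eq_single 0]
      · simp [p]
      · intro i _ hi
        simp [p, hi]
      · simp
    refine ⟨ev p, ⟨p, rfl⟩, fun h => hp (hevinj (by rw [h, map_zero])), le_antisymm ?_ (hwt p hp)⟩
    have h1 : ((Finset.univ : Finset (Fin 6)) ×ˢ (Finset.univ.filter (fun j : Fin m => (j : ℕ) < t))).card ≤
        (Finset.univ.filter (fun i => ev p i = 0)).card := by
      refine Finset.card_le_card_of_injOn e.symm ?_ e.symm.injective.injOn
      rintro ⟨a, b⟩ hab
      simp at hab
      simp only [Finset.coe_filter, Finset.mem_univ, true_and, Set.mem_ofPred_eq]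
      rw [hevp, eval_prod]
      refine Finset.prod_eq_zero (i := b) (by simpa using hab) ?_
      simp [y]
    rw [Finset.card_product, hcardt] at h1
    have h2 := wt_add (6 * m) (ev p)
    simp at h1
    omega
  · intro i
    let R : Finset (Fin (6 * m)) := Finset.univ.filter (fun j => (e j).2 = (e i).2)
    have hR : R.card = 6 := by
      have : R = (Finset.univ : Finset (Fin 6)).image (fun a => e.symm (a, (e i).2)) := by
        ext j
        simp only [R, Finset.mem_filter, Finset.mem_univ, true_and, Finset.mem_image]
        constructor
        · intro h; exact ⟨(e j).1, by rw [← h]; simp⟩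
        · rintro ⟨a, rfl⟩; simp
      rw [this, Finset.card_image_of_injective]
      · simp
      · intro a a' h; simpa using h
    refine ⟨R, by simp [R], by rw [hR], ?_⟩
    rintro _ ⟨p, rfl⟩ ⟨j0, hj0, hne⟩
    let h : F[X] := ∑ k : Fin 4, C ((p k : F[X]).eval (yv (e i).2)) * X ^ (k : ℕ)
    have hh : ∀ j ∈ R, ev p j = h.eval (x j) := by
      intro j hj
      simp only [R, Finset.mem_filter, Finset.mem_univ, true_and] at hj
      rw [hevd]
      simp only [h, eval_finsetSum, eval_mul, eval_C, eval_pow, eval_X, y, hj]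
      exact Finset.sum_congr rfl fun k _ => mul_comm _ _
    have hh0 : h ≠ 0 := by
      intro h0
      rw [hh j0 hj0, h0] at hne
      simp at hne
    have hdeg : h.natDegree ≤ 3 := by
      apply natDegree_sum_le_of_forall_le
      intro k _
      refine (natDegree_C_mul_X_pow_le _ _).trans ?_
      omega
    have hzero : (R.filter (fun j => ev p j = 0)).card ≤ 3 := by
      refine le_trans ?_ hdeg
      refine le_trans ?_ (card_roots' h)
      refine le_trans ?_ (Multiset.toFinset_card_le _)
      refine Finset.card_le_card_of_injOn x ?_ ?_
      · intro j hj
        rw [Finset.mem_coe, Finset.mem_filter] at hj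
        rw [Finset.mem_coe, Multiset.mem_toFinset, mem_roots hh0, IsRoot.def, ← hh j hj.1]
        exact hj.2
      · intro j hj j' hj' hxx
        rw [Finset.mem_coe, Finset.mem_filter] at hj hj'
        have a1 := hj.1
        have a2 := hj'.1
        simp only [R, Finset.mem_filter, Finset.mem_univ, true_and] at a1 a2
        refine hinj j j' hxx ?_
        simp only [y, a1, a2]
    have := Finset.card_filter_add_card_filter_not (s := R) (fun j => ev p j = 0)
    rw [hR] at this
    change 3 ≤ (R.filter (fun j => ¬ (ev p j = 0))).card
    omega
  · unfold SingletonOptimal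
    have : (4 * t + 1 + 4 - 1) / 4 = t + 1 := by omega
    rw [this]
    push_cast [htm.le]
    ring
end code

/-- For odd `s` and `q = 5^(2s)`, for all
`1 ≤ t < m ≤ 2⌈(q + 4·5^s - 25)/12⌉ - 1`, there exists an optimal `(4, 3)`-LRC
with parameters `[6m, 4t + 1, 6(m-t)]_q`. -/
theorem stmt_7 (s : ℕ) (hs : 0 < s) (hsodd : Odd s) (q : ℕ) (hq : q = 5 ^ (2 * s))
    (t m : ℕ) (ht : 1 ≤ t) (htm : t < m)
    (hm : (m : ℤ) ≤ 2 * ⌈((q : ℚ) + 4 * 5 ^ s - 25) / 12⌉ - 1)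
    (F : Type*) [Field F] [Fintype F] [DecidableEq F] (hF : Fintype.card F = q) :
    ExistsOptimalLRC F (6 * m) (4 * t + 1) (6 * (m - t)) 4 3 := by
  have hp5 : Fact (Nat.Prime 5) := ⟨by norm_num⟩
  have hcard : Fintype.card F = 5 ^ (2 * s) := hF.trans hq
  have hchar : CharP F 5 := charP_of_card_eq_prime_pow hcard
  letI : Algebra (ZMod 5) F := ZMod.algebra F 5
  obtain ⟨u, rfl⟩ : ∃ u, s = u + 1 := ⟨s - 1, by omega⟩
  set P := 5 ^ u with hPdef
  have hP : 0 < P := by positivity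
  have hq25 : Fintype.card F = 25 * P ^ 2 := by
    rw [hcard, hPdef, ← pow_mul, show 2 * (u + 1) = u * 2 + 2 by ring, pow_add]; ring
  have h24 : 24 ∣ Fintype.card F - 1 := by
    rw [hcard, pow_mul]
    have := Nat.sub_dvd_pow_sub_pow (5 ^ 2) 1 (u + 1)
    simpa using this
  obtain ⟨g, hg⟩ := IsCyclic.exists_ofOrder_eq_natCard (α := Fˣ)
  have hNc : Nat.card Fˣ = Fintype.card F - 1 := by
    rw [Nat.card_eq_fintype_card, Fintype.card_units]
  obtain ⟨k, hk⟩ := h24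
  have hkpos : k ≠ 0 := by
    rintro rfl
    have : 1 ≤ P ^ 2 := Nat.one_le_pow _ _ hP
    omega
  have hord : orderOf (g ^ k) = 24 := by
    rw [orderOf_pow_of_dvd hkpos (by rw [hg, hNc, hk]; exact Dvd.intro_left _ rfl), hg, hNc, hk]
    exact Nat.mul_div_cancel _ (Nat.pos_of_ne_zero hkpos)
  have hordθ : orderOf (((g ^ k : Fˣ) : F)) = 24 := by rw [orderOf_units, hord]
  set θ : F := ((g ^ k : Fˣ) : F) with hθdef
  have hθ : θ ^ 24 = 1 := by rw [← hordθ]; exact pow_orderOf_eq_one θ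
  have hθ4 : θ ^ 4 ≠ 1 := pow_ne_one_of_lt_orderOf (by norm_num) (by rw [hordθ]; norm_num)
  have hθ12' : θ ^ 12 ≠ 1 := pow_ne_one_of_lt_orderOf (by norm_num) (by rw [hordθ]; norm_num)
  have hθ12 : θ ^ 12 = -1 := by
    have : (θ ^ 12 - 1) * (θ ^ 12 + 1) = 0 := by linear_combination hθ
    rcases mul_eq_zero.1 this with h | h
    · exact absurd (sub_eq_zero.1 h) hθ12'
    · exact eq_neg_of_add_eq_zero_left h
  obtain ⟨c, hc, hcount⟩ := curve_count P hP hq25 θ hθ hθ4 hθ12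
  have h5 : (5 : F) = 0 := by exact_mod_cast CharP.cast_eq_zero F 5
  have h6 : (6 : F) ≠ 0 := by
    rw [show (6 : F) = 1 by linear_combination h5]; exact one_ne_zero
  let T : Finset (F × F) := Finset.univ.filter (fun p : F × F => p.1 ≠ 0 ∧ p.2 ^ 2 = c * (p.1 ^ 6 - 1))
  have hfib : T.card ≤ 6 * (T.image Prod.snd).card := by
    refine Finset.card_le_mul_card_image (s := T) 6 ?_
    intro b _
    have hd : (Polynomial.X ^ 6 - Polynomial.C (b ^ 2 / c + 1) : Polynomial F).natDegree = 6 :=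
      Polynomial.natDegree_X_pow_sub_C
    have h0 : (Polynomial.X ^ 6 - Polynomial.C (b ^ 2 / c + 1) : Polynomial F) ≠ 0 := by
      intro h; rw [h] at hd; simp at hd
    calc _ ≤ (Polynomial.X ^ 6 - Polynomial.C (b ^ 2 / c + 1) : Polynomial F).roots.toFinset.card := by
          refine Finset.card_le_card_of_injOn Prod.fst ?_ ?_
          · intro p hp
            simp only [T, Finset.coe_filter, Finset.mem_filter, Finset.mem_univ, true_and, Set.mem_ofPred_eq] at hp
            obtain ⟨⟨-, h1⟩, h2⟩ := hp
            rw [Finset.mem_coe, Multiset.mem_toFinset, Polynomial.mem_roots h0, Polynomial.IsRoot.def,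
              Polynomial.eval_sub, Polynomial.eval_pow, Polynomial.eval_X, Polynomial.eval_C, ← h2, h1]
            field_simp
            ring
          · intro p hp p' hp' h
            simp only [Finset.coe_filter, Set.mem_ofPred_eq] at hp hp'
            exact Prod.ext h (hp.2.trans hp'.2.symm)
      _ ≤ _ := Multiset.toFinset_card_le _
      _ ≤ _ := Polynomial.card_roots' _
      _ = 6 := hd
  have hmle : m ≤ (T.image Prod.snd).card := by
    have hc1 : (⌈((q : ℚ) + 4 * 5 ^ (u + 1) - 25) / 12⌉ : ℚ) < ((q : ℚ) + 4 * 5 ^ (u + 1) - 25) / 12 + 1 :=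
      Int.ceil_lt_add_one _
    set z := ⌈((q : ℚ) + 4 * 5 ^ (u + 1) - 25) / 12⌉
    have hqP : (q : ℚ) = 25 * (P : ℚ) ^ 2 := by rw [← hF, hq25]; push_cast; ring
    have h5P : (5 : ℚ) ^ (u + 1) = 5 * (P : ℚ) := by rw [hPdef, pow_succ]; push_cast; ring
    rw [hqP, h5P] at hc1
    have hc2 : (12 : ℚ) * z < 25 * (P : ℚ) ^ 2 + 20 * P - 13 := by linarith
    have hc3 : (12 : ℤ) * z < 25 * (P : ℤ) ^ 2 + 20 * P - 13 := by exact_mod_cast hc2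
    have hT : 25 * P ^ 2 + 20 * P ≤ T.card + 4 := hcount
    zify at hT hfib ⊢
    linarith
  obtain ⟨S, hSsub, hScard⟩ := Finset.exists_subset_card_eq hmle
  let es : Fin m ≃ S := (Finset.equivFinOfCardEq hScard).symm
  have hch : ∀ j : Fin m, ∃ w : F, w ≠ 0 ∧ ((es j : F)) ^ 2 = c * (w ^ 6 - 1) := by
    intro j
    have := hSsub (es j).2
    simp only [T, Finset.mem_image, Finset.mem_filter, Finset.mem_univ, true_and] at this
    obtain ⟨p, ⟨h1, h2⟩, h3⟩ := this
    exact ⟨p.1, h1, by rw [← h3]; exact h2⟩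
  choose w hw hwc using hch
  refine code_exists h6 c hc t m ht htm (θ ^ 4) ?_ (by linear_combination hθ) w
    (fun j => (es j : F)) hw (fun a b h => es.injective (Subtype.ext h)) hwc
  intro a b hab
  simp only [← pow_mul] at hab
  have := pow_injOn_Iio_orderOf (x := θ) (by simp [hordθ]; omega) (by simp [hordθ]; omega) hab
  exact Fin.ext (by omega)
end

section
/- Let Q be a prime power with Q ≠ 5 and Q ≡ 5, 15, 21, or 23 (mod 24), let s be an odd positive integer, and let q = Q^{2s}. Then for all integers t, m with 1 ≤ t < m ≤ 2⌈(q + 4Q^{s} − 25)/12⌉ − 1, there exists an optimal (4, 3)-LRC over F_q with parameters [6m, 4t + 1, 6(m−t)]_q. -/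
set_option maxHeartbeats 400000

open Finset in
lemma sum_comp_sq {F : Type*} [Field F] [Fintype F] [DecidableEq F] (hF : ringChar F ≠ 2)
    (Φ : F → ℂ) :
    ∑ x : F, Φ (x ^ 2) = ∑ u : F, Φ u * (1 + ((quadraticChar F u : ℤ) : ℂ)) := by
  rw [← Finset.sum_fiberwise (s := univ) (g := fun x : F => x ^ 2)]
  refine Finset.sum_congr rfl fun u _ => ?_
  have h := quadraticChar_card_sqrts hF u
  have h2 : ∑ x : F with x ^ 2 = u, Φ (x ^ 2) = ∑ x : F with x ^ 2 = u, Φ u := by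
    refine Finset.sum_congr rfl fun x hx => ?_
    rw [(Finset.mem_filter.1 hx).2]
  rw [h2, Finset.sum_const, nsmul_eq_mul, mul_comm]
  congr 1
  have h3 : ({x : F | x ^ 2 = u} : Set F).toFinset = univ.filter (fun x : F => x ^ 2 = u) := by
    ext; simp
  rw [h3] at h
  have := congrArg (fun z : ℤ => (z : ℂ)) h
  push_cast at this
  rw [this]; ring

lemma quad_eq {F : Type*} [Field F] [Fintype F] [DecidableEq F] (hF : ringChar F ≠ 2)
    (χ : MulChar F ℂ) (h1 : χ ≠ 1) (h2 : χ ^ 2 = 1) :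
    χ = (quadraticChar F).ringHomComp (Int.castRingHom ℂ) := by
  obtain ⟨g, hg⟩ := IsCyclic.exists_generator (α := Fˣ)
  have key : ∀ φ : MulChar F ℂ, φ ≠ 1 → φ ^ 2 = 1 → φ g.val = -1 := by
    intro φ h1 h2
    have h3 : φ g.val ^ 2 = 1 := by
      rw [← MulChar.pow_apply_coe, h2, MulChar.one_apply_coe]
    rcases sq_eq_one_iff.1 h3 with h | h
    · exact absurd ((MulChar.eq_iff hg φ 1).2 (by rw [h, MulChar.one_apply_coe])) h1
    · exact h
  refine (MulChar.eq_iff hg _ _).2 ?_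
  rw [key χ h1 h2, key]
  · rw [MulChar.ringHomComp_ne_one_iff]
    · exact quadraticChar_ne_one hF
    · exact (Int.castRingHom ℂ).injective_int
  · exact ((quadraticChar_isQuadratic F).comp _).sq_eq_one

lemma jac_frob {F : Type*} [Field F] [Fintype F] [DecidableEq F] (p e : ℕ) [Fact p.Prime] [CharP F p]
    (χ φ : MulChar F ℂ) : jacobiSum (χ ^ (p ^ e)) (φ ^ (p ^ e)) = jacobiSum χ φ := by
  have hp : p ^ e ≠ 0 := pow_ne_zero _ (Fact.out : p.Prime).ne_zero
  unfold jacobiSum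
  refine Fintype.sum_bijective (fun x : F => x ^ (p ^ e)) ?_ _ _ ?_
  · have := (iterateFrobeniusEquiv F p e).bijective
    convert this using 1
    ext x
    simp [iterateFrobeniusEquiv_apply, iterateFrobenius_def]
  · intro x
    rw [MulChar.pow_apply' _ hp, MulChar.pow_apply' _ hp, ← map_pow, ← map_pow, sub_pow_char_pow, one_pow]

lemma jac_main {F : Type*} [Field F] [Fintype F] [DecidableEq F] (p e : ℕ) [Fact p.Prime]
    [CharP F p] (hp2 : p ≠ 2) (hcard : Fintype.card F = (p ^ e) ^ 2)
    (hP : p ^ e % 8 = 5 ∨ p ^ e % 8 = 7) :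
    (∑ x : F, quadraticChar F (x ^ 5 - x)) ^ 2 = (4 * (p : ℤ) ^ e) ^ 2 := by
  set P := p ^ e with hPdef
  have hr : ringChar F ≠ 2 := by rw [ringChar.eq F p]; exact hp2
  have hq8 : Fintype.card F % 8 = 1 := by
    rw [hcard]; rcases hP with h | h <;> simp [Nat.pow_mod, h]
  obtain ⟨ψ, hψ⟩ := MulChar.exists_mulChar_orderOf F (n := 8) (by omega)
    (Complex.isPrimitiveRoot_exp 8 (by norm_num))
  have hψ8 : ψ ^ 8 = 1 := by rw [← hψ]; exact pow_orderOf_eq_one ψ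
  have hne : ∀ n, n % 8 ≠ 0 → ψ ^ n ≠ 1 := by
    intro n hn h
    have := orderOf_dvd_of_pow_eq_one h
    rw [hψ] at this; omega
  have hmod : ∀ n, ψ ^ n = ψ ^ (n % 8) := by
    intro n
    conv_lhs => rw [← Nat.div_add_mod n 8, pow_add, pow_mul, hψ8, one_pow, one_mul]
  have hχ : ψ ^ 4 = (quadraticChar F).ringHomComp (Int.castRingHom ℂ) :=
    quad_eq hr _ (hne 4 (by norm_num)) (by rw [← pow_mul]; exact hψ8)
  have hχa : ∀ x : F, ((quadraticChar F x : ℤ) : ℂ) = (ψ ^ 4) x := by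
    intro x; rw [hχ]; simp
  have hm1 : (ψ ^ 4) (-1) = 1 := by
    rw [← hχa, (quadraticChar_one_iff_isSquare (neg_ne_zero.2 one_ne_zero)).2]
    · simp
    · rw [FiniteField.isSquare_neg_one_iff]; omega
  -- Gauss sums
  have hchar0 : ringChar ℂ ≠ ringChar F := by
    rw [ringChar.eq F p, ringChar.eq_zero]; exact (Fact.out : p.Prime).ne_zero.symm
  let J : ℕ → ℂ := fun n => jacobiSum (ψ ^ n) (ψ ^ 4)
  let ad := AddChar.FiniteField.primitiveChar_to_Complex F
  have hprim : ad.IsPrimitive := AddChar.FiniteField.primitiveChar_to_Complex_isPrimitive F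
  have hq0 : (Fintype.card F : ℂ) ≠ 0 := by exact_mod_cast Fintype.card_ne_zero
  have hg : ∀ n, n % 8 ≠ 0 → gaussSum (ψ ^ n) ad ≠ 0 := fun n hn =>
    gaussSum_ne_zero_of_nontrivial hq0 (hne n hn) hprim
  have hg4 : gaussSum (ψ ^ 4) ad ^ 2 = Fintype.card F := by
    rw [gaussSum_sq (hne 4 (by norm_num)) _ hprim, hm1, one_mul]
    rw [hχ]; exact (quadraticChar_isQuadratic F).comp _
  have hJP : ∀ n, n % 4 ≠ 0 → J n * J (n + 4) = (Fintype.card F : ℂ) := by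
    intro n hn
    have e1 : ψ ^ n * ψ ^ 4 = ψ ^ (n + 4) := (pow_add _ _ _).symm
    have e2 : ψ ^ (n + 4) * ψ ^ 4 = ψ ^ n := by
      rw [← pow_add, add_assoc, pow_add]; norm_num [hψ8]
    have h1 := jacobiSum_mul_nontrivial (χ := ψ ^ n) (φ := ψ ^ 4)
      (by rw [e1]; exact hne _ (by omega)) ad
    have h2 := jacobiSum_mul_nontrivial (χ := ψ ^ (n + 4)) (φ := ψ ^ 4)
      (by rw [e2]; exact hne _ (by omega)) ad
    rw [e1] at h1
    rw [e2] at h2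
    have hn1 := hg n (by omega)
    have hn2 := hg (n + 4) (by omega)
    apply mul_left_cancel₀ (mul_ne_zero hn1 hn2)
    rw [← hg4]
    linear_combination (gaussSum (ψ ^ n) ad * J (n + 4)) * h1 +
      (gaussSum (ψ ^ n) ad * gaussSum (ψ ^ 4) ad) * h2
  have hJI : ∀ n, n ≤ 8 → n % 4 ≠ 0 → J n * J (8 - n) = (Fintype.card F : ℂ) := by
    intro n hn8 hn
    have h := jacobiSum_mul_jacobiSum_inv hchar0 (χ := ψ ^ n) (φ := ψ ^ 4)
      (hne n (by omega)) (hne 4 (by norm_num)) (by rw [← pow_add]; exact hne _ (by omega))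
    have e1 : (ψ ^ n)⁻¹ = ψ ^ (8 - n) := by
      rw [inv_eq_iff_mul_eq_one, ← pow_add, Nat.add_sub_cancel' hn8, hψ8]
    have e2 : (ψ ^ 4)⁻¹ = ψ ^ 4 := by
      rw [inv_eq_iff_mul_eq_one, ← pow_add, hψ8]
    rw [e1, e2] at h
    exact h
  have hF : J 1 = J 5 ∨ J 1 = J 7 := by
    have h := jac_frob p e ψ (ψ ^ 4)
    rw [← hPdef, ← pow_mul, hmod P, hmod (4 * P)] at h
    have h4 : 4 * P % 8 = 4 := by omega
    rw [h4] at h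
    have h1 : J 1 = jacobiSum ψ (ψ ^ 4) := by simp [J]
    rcases hP with h' | h' <;> rw [h'] at h
    · left; rw [h1, ← h]
    · right; rw [h1, ← h]
  have a1 := hJP 1 (by norm_num)
  have a2 := hJP 3 (by norm_num)
  have a3 := hJI 1 (by norm_num) (by norm_num)
  have a4 := hJI 3 (by norm_num) (by norm_num)
  norm_num at a1 a2 a3 a4
  have n1 : J 1 ≠ 0 := fun h => hq0 (by rw [← a1, h, zero_mul])
  have n5 : J 5 ≠ 0 := fun h => hq0 (by rw [← a1, h, mul_zero])
  have h57 : J 5 = J 7 := mul_left_cancel₀ n1 (a1.trans a3.symm)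
  have h13 : J 1 = J 3 := mul_right_cancel₀ n5 (a1.trans a4.symm)
  have h15 : J 1 = J 5 := by
    rcases hF with h | h
    · exact h
    · rw [h, h57]
  have hJ2 : J 1 ^ 2 = (Fintype.card F : ℂ) := by rw [← a1, ← h15, sq]
  have hT : ((∑ x : F, quadraticChar F (x ^ 5 - x) : ℤ) : ℂ) = J 1 + J 3 + J 5 + J 7 := by
    let Φ : F → ℂ := fun u => ψ u * (ψ ^ 4) (1 - u)
    have s1 : ((∑ x : F, quadraticChar F (x ^ 5 - x) : ℤ) : ℂ) = ∑ x : F, Φ ((x ^ 2) ^ 2) := by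
      push_cast
      refine Finset.sum_congr rfl fun x _ => ?_
      have : x ^ 5 - x = x * (-1 * (1 - (x ^ 2) ^ 2)) := by ring
      rw [hχa, this, map_mul, map_mul, hm1, one_mul, MulChar.pow_apply' _ (by norm_num) x, ← map_pow]
      simp only [Φ]
      rw [← pow_mul]
    have s2 : ∑ x : F, Φ ((x ^ 2) ^ 2) = ∑ u : F, (Φ (u ^ 2) * (1 + (ψ ^ 2) (u ^ 2))) := by
      rw [sum_comp_sq hr (fun u => Φ (u ^ 2))]
      refine Finset.sum_congr rfl fun x _ => ?_
      rw [hχa, MulChar.pow_apply' _ (by norm_num) x, MulChar.pow_apply' _ (by norm_num) (x ^ 2),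
        ← map_pow, ← map_pow, ← pow_mul]
    rw [s1, s2, sum_comp_sq hr (fun u => Φ u * (1 + (ψ ^ 2) u))]
    simp only [J, jacobiSum, ← Finset.sum_add_distrib]
    refine Finset.sum_congr rfl fun x _ => ?_
    rw [hχa]
    simp only [Φ]
    rw [MulChar.pow_apply' _ (by norm_num) x, MulChar.pow_apply' _ (by norm_num) x,
      MulChar.pow_apply' _ (by norm_num) x, MulChar.pow_apply' _ (by norm_num) x,
      MulChar.pow_apply' _ (by norm_num) x, MulChar.pow_apply' _ (by norm_num) x]
    ring
  have : ((∑ x : F, quadraticChar F (x ^ 5 - x) : ℤ) : ℂ) ^ 2 = (4 * (p : ℂ) ^ e) ^ 2 := by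
    rw [hT, ← h57, ← h13, ← h15]
    have : (4 * (p : ℂ) ^ e) ^ 2 = 16 * (Fintype.card F : ℂ) := by
      rw [hcard, hPdef]; push_cast; ring
    rw [this, ← hJ2]; ring
  exact_mod_cast this

lemma count_main {F : Type*} [Field F] [Fintype F] [DecidableEq F] (p e : ℕ) [Fact p.Prime]
    [CharP F p] (hp2 : p ≠ 2) (hcard : Fintype.card F = (p ^ e) ^ 2)
    (hP : p ^ e % 8 = 5 ∨ p ^ e % 8 = 7) :
    ∃ ε : F, ε ≠ 0 ∧ Fintype.card F + 4 * p ^ e ≤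
      2 * (Finset.univ.filter fun x : F => x ^ 5 - x ≠ 0 ∧ IsSquare (ε * (x ^ 5 - x))).card + 5 := by
  have hr : ringChar F ≠ 2 := by rw [ringChar.eq F p]; exact hp2
  have h := jac_main (F := F) p e hp2 hcard hP
  have key : ∃ ε : F, ε ≠ 0 ∧ ∑ x : F, quadraticChar F (ε * (x ^ 5 - x)) = 4 * (p : ℤ) ^ e := by
    rcases sq_eq_sq_iff_eq_or_eq_neg.1 h with h | h
    · exact ⟨1, one_ne_zero, by simpa using h⟩
    · obtain ⟨ε, hε⟩ := quadraticChar_exists_neg_one' hr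
      refine ⟨ε, ε.ne_zero, ?_⟩
      simp only [map_mul, hε, ← Finset.mul_sum]
      rw [h]; ring
  obtain ⟨ε, hε, hs⟩ := key
  refine ⟨ε, hε, ?_⟩
  set A := Finset.univ.filter fun x : F => x ^ 5 - x ≠ 0 ∧ IsSquare (ε * (x ^ 5 - x)) with hA
  set Z := Finset.univ.filter fun x : F => x ^ 5 - x = 0 with hZ
  have hZ5 : Z.card ≤ 5 := by
    let f : Polynomial F := Polynomial.X ^ 5 - Polynomial.X
    have hd : f.natDegree = 5 := by simp only [f]; compute_degree!
    have hf : f ≠ 0 := by intro h; rw [h] at hd; simp at hd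
    calc Z.card ≤ f.roots.toFinset.card := by
          apply Finset.card_le_card
          intro x hx
          rw [Multiset.mem_toFinset, Polynomial.mem_roots hf]
          simpa [f, hZ] using hx
      _ ≤ f.natDegree := (Multiset.toFinset_card_le _).trans (Polynomial.card_roots' f)
      _ = 5 := hd
  have hpt : ∀ x : F, quadraticChar F (ε * (x ^ 5 - x)) + 1 =
      2 * (if x ∈ A then 1 else 0) + (if x ∈ Z then 1 else 0) := by
    intro x
    by_cases h0 : x ^ 5 - x = 0
    · simp [hA, hZ, h0]
    · have h1 : ε * (x ^ 5 - x) ≠ 0 := mul_ne_zero hε h0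
      by_cases h2 : IsSquare (ε * (x ^ 5 - x))
      · simp [hA, hZ, h0, h2, (quadraticChar_one_iff_isSquare h1).2 h2, -quadraticChar_apply, -map_mul]
      · simp [hA, hZ, h0, h2, quadraticChar_neg_one_iff_not_isSquare.2 h2, -quadraticChar_apply, -map_mul]
  have h2 := Finset.sum_congr (rfl : (Finset.univ : Finset F) = _) (fun x _ => hpt x)
  rw [Finset.sum_add_distrib, Finset.sum_add_distrib, hs, ← Finset.mul_sum] at h2
  simp only [Finset.sum_ite_mem, Finset.univ_inter, Finset.sum_const, Finset.card_univ,
    nsmul_eq_mul, mul_one] at h2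
  have h3 : (Fintype.card F : ℤ) + 4 * (p ^ e : ℕ) ≤ 2 * A.card + 5 := by
    push_cast
    have : (Z.card : ℤ) ≤ 5 := by exact_mod_cast hZ5
    linarith
  exact_mod_cast h3
open Polynomial in
lemma nonsq {F : Type*} [Field F] (f A B : F[X]) (hsq : Squarefree f) (hu : ¬ IsUnit f)
    (h : A ^ 2 = f * B ^ 2) : A = 0 ∧ B = 0 := by
  classical
  have hf0 : f ≠ 0 := hsq.ne_zero
  by_cases hB : B = 0
  · subst hB
    simpa using h
  exfalso
  have hg : EuclideanDomain.gcd A B ≠ 0 := by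
    intro h; exact hB (EuclideanDomain.gcd_eq_zero_iff.1 h).2
  obtain ⟨A', hA'⟩ := EuclideanDomain.gcd_dvd_left A B
  obtain ⟨B', hB'⟩ := EuclideanDomain.gcd_dvd_right A B
  have hcop : IsCoprime A' B' := by
    have e := EuclideanDomain.gcd_eq_gcd_ab A B
    refine ⟨EuclideanDomain.gcdA A B, EuclideanDomain.gcdB A B, ?_⟩
    apply mul_left_cancel₀ hg
    linear_combination -e - EuclideanDomain.gcdA A B * hA' - EuclideanDomain.gcdB A B * hB'
  set g := EuclideanDomain.gcd A B
  have h2 : A' ^ 2 = f * B' ^ 2 := by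
    apply mul_left_cancel₀ (pow_ne_zero 2 hg)
    rw [hA', hB'] at h
    linear_combination h
  have hBu : IsUnit (B' ^ 2) := by
    have : IsCoprime (A' ^ 2) (B' ^ 2) := hcop.pow
    exact this.isUnit_of_dvd' (h2 ▸ Dvd.intro_left _ rfl) dvd_rfl
  have hAu : IsUnit A' := by
    apply hsq
    have : A' * A' ∣ f * B' ^ 2 := by rw [← h2, sq]
    exact hBu.dvd_mul_right.1 this
  apply hu
  exact isUnit_of_mul_isUnit_left (h2 ▸ hAu.pow 2)

namespace LRCCode
open Polynomial
variable {F : Type*} [Field F]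

noncomputable def E (f : F[X]) (i : ℕ) : F[X] := if i % 2 = 0 then f ^ (i / 2) else 0
noncomputable def O (f : F[X]) (i : ℕ) : F[X] := if i % 2 = 0 then 0 else f ^ (i / 2)
noncomputable def A (f h : F[X]) (p : ℕ → F[X]) (t : ℕ) : F[X] :=
  ∑ i ∈ Finset.range t, p i * E f i * h ^ (t - 1 - i)
noncomputable def B (f h : F[X]) (p : ℕ → F[X]) (t : ℕ) : F[X] :=
  ∑ i ∈ Finset.range t, p i * O f i * h ^ (t - 1 - i)

lemma E_succ (f : F[X]) (i : ℕ) : E f (i + 1) = f * O f i := by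
  unfold E O
  rcases Nat.mod_two_eq_zero_or_one i with h | h
  · rw [if_neg (by omega), if_pos h, mul_zero]
  · rw [if_pos (by omega), if_neg (by omega), ← pow_succ', show (i + 1) / 2 = i / 2 + 1 by omega]

lemma O_succ (f : F[X]) (i : ℕ) : O f (i + 1) = E f i := by
  unfold E O
  rcases Nat.mod_two_eq_zero_or_one i with h | h
  · rw [if_neg (by omega), if_pos h, show (i + 1) / 2 = i / 2 by omega]
  · rw [if_pos (by omega), if_neg (by omega)]

lemma degE (f : F[X]) (hf : f.natDegree ≤ 6) (i : ℕ) : (E f i).natDegree ≤ 3 * i := by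
  unfold E
  split_ifs with h
  · refine natDegree_pow_le.trans ?_
    calc i / 2 * f.natDegree ≤ i / 2 * 6 := Nat.mul_le_mul_left _ hf
      _ ≤ _ := by omega
  · simp

lemma degO (f : F[X]) (hf : f.natDegree ≤ 6) (i : ℕ) : (O f i).natDegree ≤ 3 * (i - 1) := by
  cases i with
  | zero => simp [O]
  | succ i => rw [O_succ]; simpa using degE f hf i

lemma pow_eval (f : F[X]) (x y : F) (hy : y ^ 2 = f.eval x) (i : ℕ) :
    y ^ i = (E f i).eval x + y * (O f i).eval x := by
  induction i with
  | zero => simp [E, O]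
  | succ i ih =>
    rw [pow_succ, ih, E_succ, O_succ, eval_mul, ← hy]; ring

lemma AB_eval (f h : F[X]) (p : ℕ → F[X]) (x a : F) (t : ℕ)
    (hy : (a * h.eval x) ^ 2 = f.eval x) :
    (∑ i ∈ Finset.range t, (p i).eval x * a ^ i) * h.eval x ^ (t - 1) =
      (A f h p t).eval x + (a * h.eval x) * (B f h p t).eval x := by
  unfold A B
  rw [eval_finsetSum, eval_finsetSum, Finset.mul_sum, Finset.sum_mul, ← Finset.sum_add_distrib]
  refine Finset.sum_congr rfl fun i hi => ?_
  have hi := Finset.mem_range.1 hi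
  have e : (t - 1) = (t - 1 - i) + i := by omega
  have := pow_eval f x _ hy i
  rw [mul_pow] at this
  simp only [eval_mul, eval_pow]
  conv_lhs => rw [e, pow_add]
  linear_combination ((p i).eval x * h.eval x ^ (t - 1 - i)) * this

lemma degA (f h : F[X]) (p : ℕ → F[X]) (hf : f.natDegree ≤ 6) (hh : h.natDegree ≤ 3)
    (hp : ∀ i, (p i).natDegree ≤ 3) (t : ℕ) : (A f h p t).natDegree ≤ 3 * t := by
  unfold A
  refine natDegree_sum_le_of_forall_le _ _ fun i hi => ?_
  have hi := Finset.mem_range.1 hi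
  refine natDegree_mul_le.trans ?_
  have h1 : (p i * E f i).natDegree ≤ 3 + 3 * i :=
    natDegree_mul_le.trans (add_le_add (hp i) (degE f hf i))
  have h2 : (h ^ (t - 1 - i)).natDegree ≤ (t - 1 - i) * 3 :=
    natDegree_pow_le.trans (Nat.mul_le_mul_left _ hh)
  omega

lemma degB (f h : F[X]) (p : ℕ → F[X]) (hf : f.natDegree ≤ 6) (hh : h.natDegree ≤ 3)
    (hp : ∀ i, (p i).natDegree ≤ 3) (t : ℕ) : (B f h p t).natDegree ≤ 3 * (t - 1) := by
  unfold B
  refine natDegree_sum_le_of_forall_le _ _ fun i hi => ?_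
  have hi := Finset.mem_range.1 hi
  by_cases hi0 : i = 0
  · subst hi0; simp [O]
  refine natDegree_mul_le.trans ?_
  have h1 : (p i * O f i).natDegree ≤ 3 + 3 * (i - 1) :=
    natDegree_mul_le.trans (add_le_add (hp i) (degO f hf i))
  have h2 : (h ^ (t - 1 - i)).natDegree ≤ (t - 1 - i) * 3 :=
    natDegree_pow_le.trans (Nat.mul_le_mul_left _ hh)
  omega

lemma A_succ (f h : F[X]) (p : ℕ → F[X]) (t : ℕ) :
    A f h p (t + 1) = h * A f h p t + p t * E f t := by
  unfold A
  rw [Finset.sum_range_succ, Finset.mul_sum]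
  congr 1
  · refine Finset.sum_congr rfl fun i hi => ?_
    have hi := Finset.mem_range.1 hi
    rw [show t + 1 - 1 - i = (t - 1 - i) + 1 by omega, pow_succ]; ring
  · simp

lemma B_succ (f h : F[X]) (p : ℕ → F[X]) (t : ℕ) :
    B f h p (t + 1) = h * B f h p t + p t * O f t := by
  unfold B
  rw [Finset.sum_range_succ, Finset.mul_sum]
  congr 1
  · refine Finset.sum_congr rfl fun i hi => ?_
    have hi := Finset.mem_range.1 hi
    rw [show t + 1 - 1 - i = (t - 1 - i) + 1 by omega, pow_succ]; ring
  · simp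

lemma nondeg (f h : F[X]) (p : ℕ → F[X]) (hh : h.natDegree = 3) (hcop : IsCoprime f h)
    (hp : ∀ i, (p i).natDegree ≤ 3) (t : ℕ) : ∀ c : F,
    A f h p t + C c * E f t = 0 → B f h p t + C c * O f t = 0 → c = 0 ∧ ∀ i < t, p i = 0 := by
  have hh0 : h ≠ 0 := by intro h0; rw [h0] at hh; simp at hh
  have hhc : ∀ c : F, h ∣ C c → c = 0 := by
    intro c hc
    by_contra h0
    have := natDegree_le_of_dvd hc (by simpa using h0)
    rw [natDegree_C] at this; omega
  have hcp : ∀ (k : ℕ) (g : F[X]), h ∣ g * f ^ k → h ∣ g := fun k g hd =>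
    (hcop.symm.pow_right (n := k)).dvd_of_dvd_mul_right hd
  have hcons : ∀ g : F[X], g.natDegree ≤ 3 → h ∣ g → ∃ c : F, g = h * C c := by
    rintro g hg ⟨u, rfl⟩
    by_cases hu : u = 0
    · exact ⟨0, by simp [hu]⟩
    rw [natDegree_mul hh0 hu, hh] at hg
    obtain ⟨c, hc⟩ := natDegree_eq_zero.1 (show u.natDegree = 0 by omega)
    exact ⟨c, by rw [hc]⟩
  induction t with
  | zero =>
    intro c h1 _
    simpa [A, E] using h1
  | succ t ih =>
    intro c h1 h2
    rw [A_succ] at h1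
    rw [B_succ] at h2
    have key : c = 0 ∧ h ∣ p t := by
      rcases Nat.mod_two_eq_zero_or_one t with ht | ht
      · have e1 : E f t = f ^ (t / 2) := if_pos ht
        have e2 : O f t = 0 := if_pos ht
        have e3 : O f (t + 1) = f ^ (t / 2) := by rw [O_succ, e1]
        have e4 : E f (t + 1) = 0 := by rw [E_succ, e2, mul_zero]
        rw [e1, e4] at h1
        rw [e2, e3] at h2
        refine ⟨hhc c (hcp (t / 2) _ ⟨-B f h p t, ?_⟩), hcp (t / 2) _ ⟨-A f h p t, ?_⟩⟩
        · linear_combination h2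
        · linear_combination h1
      · have e1 : E f t = 0 := if_neg (by omega)
        have e2 : O f t = f ^ (t / 2) := if_neg (by omega)
        have e3 : O f (t + 1) = 0 := by rw [O_succ, e1]
        have e4 : E f (t + 1) = f ^ (t / 2 + 1) := by rw [E_succ, e2, pow_succ']
        rw [e1, e4] at h1
        rw [e2, e3] at h2
        refine ⟨hhc c (hcp (t / 2 + 1) _ ⟨-A f h p t, ?_⟩), hcp (t / 2) _ ⟨-B f h p t, ?_⟩⟩
        · linear_combination h1
        · linear_combination h2
    obtain ⟨rfl, hd⟩ := key
    obtain ⟨c', hc'⟩ := hcons _ (hp t) hd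
    have := ih c' (mul_left_cancel₀ hh0 (by rw [hc'] at h1; simp at h1; linear_combination h1))
      (mul_left_cancel₀ hh0 (by rw [hc'] at h2; simp at h2; linear_combination h2))
    refine ⟨rfl, fun i hi => ?_⟩
    rcases Nat.lt_succ_iff_lt_or_eq.1 hi with h | h
    · exact this.2 i h
    · rw [h, hc', this.1]; simp

/-- zero count -/
lemma zero_count {ι : Type*} [DecidableEq F] (f h : F[X]) (p : ℕ → F[X]) (c : F)
    (hf : f.natDegree ≤ 6)
    (hh : h.natDegree = 3) (hcop : IsCoprime f h) (hsq : Squarefree f) (hu : ¬ IsUnit f)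
    (h2 : (2 : F) ≠ 0)
    (hp : ∀ i, (p i).natDegree ≤ 3) (t : ℕ) (ht : 1 ≤ t) (hne : c ≠ 0 ∨ ∃ i < t, p i ≠ 0)
    (Z : Finset ι) (x a : ι → F) (hinj : ∀ i ∈ Z, ∀ j ∈ Z, x i = x j → a i = a j → i = j)
    (hcurve : ∀ i ∈ Z, (a i * h.eval (x i)) ^ 2 = f.eval (x i))
    (hfx : ∀ i ∈ Z, f.eval (x i) ≠ 0)
    (hz : ∀ i ∈ Z, (∑ k ∈ Finset.range t, (p k).eval (x i) * a i ^ k)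
       + c * a i ^ t * h.eval (x i) = 0) : Z.card ≤ 6 * t := by
  set U := A f h p t + C c * E f t with hU
  set V := B f h p t + C c * O f t with hV
  have hUV : ¬ (U = 0 ∧ V = 0) := by
    rintro ⟨h1, h2⟩
    have := nondeg f h p hh hcop hp t c h1 h2
    rcases hne with hc | ⟨i, hi, hpi⟩
    · exact hc this.1
    · exact hpi (this.2 i hi)
  set N := U ^ 2 - f * V ^ 2 with hN
  have hN0 : N ≠ 0 := fun h0 => hUV (nonsq f U V hsq hu (sub_eq_zero.1 h0))
  have hdU : U.natDegree ≤ 3 * t := natDegree_add_le_of_degree_le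
    (degA f h p hf hh.le hp t) ((natDegree_C_mul_le _ _).trans (degE f hf t))
  have hdV : V.natDegree ≤ 3 * (t - 1) := natDegree_add_le_of_degree_le
    (degB f h p hf hh.le hp t) ((natDegree_C_mul_le _ _).trans (degO f hf t))
  have hdN : N.natDegree ≤ 6 * t := by
    refine (natDegree_sub_le _ _).trans (max_le ?_ ?_)
    · refine natDegree_pow_le.trans ?_; omega
    · have : (V ^ 2).natDegree ≤ 2 * (3 * (t - 1)) :=
        natDegree_pow_le.trans (Nat.mul_le_mul_left _ hdV)
      have := natDegree_mul_le (p := f) (q := V ^ 2)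
      omega
  have hval : ∀ i ∈ Z, U.eval (x i) + (a i * h.eval (x i)) * V.eval (x i) = 0 := by
    intro i hi
    have e1 := AB_eval f h p (x i) (a i) t (hcurve i hi)
    have e2 := pow_eval f (x i) _ (hcurve i hi) t
    have e3 : h.eval (x i) ^ t = h.eval (x i) ^ (t - 1) * h.eval (x i) := by
      rw [← pow_succ]; congr 1; omega
    rw [mul_pow, e3] at e2
    simp only [hU, hV, eval_add, eval_mul, eval_C]
    linear_combination h.eval (x i) ^ (t - 1) * hz i hi - e1 - c * e2
  have hle : Z.val.map x ≤ N.roots := by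
    rw [Multiset.le_iff_count]
    intro x0
    rw [count_roots, Multiset.count_map]
    by_contra hlt
    push Not at hlt
    have hpos : 0 < N.rootMultiplicity x0 ∨ (Z.filter fun i => x0 = x i).card = 0 := by
      by_cases he : (Z.filter fun i => x0 = x i) = ∅
      · right; rw [he]; rfl
      left
      obtain ⟨i, hi⟩ := Finset.nonempty_iff_ne_empty.2 he
      rw [Finset.mem_filter] at hi
      rw [rootMultiplicity_pos hN0, IsRoot.def, hi.2]
      simp only [hN, eval_sub, eval_mul, eval_pow]
      rw [← hcurve i hi.1]
      linear_combination (U.eval (x i) - (a i * h.eval (x i)) * V.eval (x i)) * hval i hi.1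
    have hlt' : N.rootMultiplicity x0 < (Z.filter fun i => x0 = x i).card := hlt
    have h1lt : 1 < (Z.filter fun i => x0 = x i).card := by omega
    -- two points
    have hsgn : ∀ i ∈ Z.filter fun i => x0 = x i, ∀ j ∈ Z.filter fun i => x0 = x i, i ≠ j →
        a i = - a j := by
      intro i hi j hj hij
      rw [Finset.mem_filter] at hi hj
      have e1 := hcurve i hi.1
      have e2 := hcurve j hj.1
      rw [← hi.2] at e1
      rw [← hj.2, ← e1] at e2
      have hh : h.eval x0 ≠ 0 := by
        intro h0
        have := hfx i hi.1
        rw [← hi.2, ← e1, h0] at this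
        simp at this
      rw [mul_pow, mul_pow] at e2
      have e3 := mul_right_cancel₀ (pow_ne_zero 2 hh) e2
      rcases sq_eq_sq_iff_eq_or_eq_neg.1 e3.symm with h | h
      · exact absurd (hinj i hi.1 j hj.1 (hi.2.symm.trans hj.2) h) hij
      · exact h
    obtain ⟨i, hi, j, hj, hij⟩ := Finset.one_lt_card.1 h1lt
    have hcard2 : (Z.filter fun i => x0 = x i).card ≤ 2 := by
      by_contra hc
      push Not at hc
      obtain ⟨i, j, k, hi, hj, hk, hij, hik, hjk⟩ := Finset.two_lt_card_iff.1 hc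
      have s1 := hsgn i hi j hj hij
      have s2 := hsgn i hi k hk hik
      have s3 := hsgn j hj k hk hjk
      have : a k = 0 := by
        have : 2 * a k = 0 := by linear_combination s2 - s1 + s3
        exact (mul_eq_zero.1 this).resolve_left h2
      rw [Finset.mem_filter] at hk
      have hc := hcurve k hk.1
      rw [this] at hc
      exact hfx k hk.1 (by rw [← hc]; ring)
    have hs := hsgn i hi j hj hij
    rw [Finset.mem_filter] at hi hj
    have v1 := hval i hi.1
    have v2 := hval j hj.1
    rw [← hi.2] at v1
    rw [← hj.2] at v2
    have hcj := hcurve j hj.1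
    have hfj := hfx j hj.1
    rw [← hj.2] at hcj hfj
    have hy : a j * h.eval x0 ≠ 0 := by
      intro h0; rw [h0] at hcj; exact hfj (by rw [← hcj]; ring)
    have hu0 : U.eval x0 = 0 := by
      have : 2 * U.eval x0 = 0 := by rw [hs] at v1; linear_combination v1 + v2
      exact (mul_eq_zero.1 this).resolve_left h2
    have hv0 : V.eval x0 = 0 := by
      rw [hu0, zero_add] at v2
      exact (mul_eq_zero.1 v2).resolve_left hy
    obtain ⟨U', hU'⟩ := dvd_iff_isRoot.2 hu0
    obtain ⟨V', hV'⟩ := dvd_iff_isRoot.2 hv0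
    have : 2 ≤ N.rootMultiplicity x0 := by
      rw [le_rootMultiplicity_iff hN0]
      refine ⟨U' ^ 2 - f * V' ^ 2, ?_⟩
      rw [hN, hU', hV']; ring
    omega
  have := Multiset.card_le_card hle
  rw [Multiset.card_map] at this
  exact this.trans ((card_roots' N).trans hdN)
end LRCCode

namespace LRCCode
open Polynomial

lemma fin_zero_count {F : Type*} [Field F] [DecidableEq F] (p : F[X]) (hp : p.natDegree ≤ 3)
    (x : Fin 6 → F) (hx : Function.Injective x) (hne : ∃ j, p.eval (x j) ≠ 0) :
    3 ≤ (Finset.univ.filter fun j => p.eval (x j) ≠ 0).card := by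
  have hp0 : p ≠ 0 := by rintro rfl; simp at hne
  have h1 : (Finset.univ.filter fun j => p.eval (x j) = 0).card ≤ 3 := by
    calc (Finset.univ.filter fun j => p.eval (x j) = 0).card
        = ((Finset.univ.filter fun j => p.eval (x j) = 0).image x).card :=
          (Finset.card_image_of_injective _ hx).symm
      _ ≤ p.roots.toFinset.card := by
          apply Finset.card_le_card
          intro y hy
          obtain ⟨j, hj, rfl⟩ := Finset.mem_image.1 hy
          rw [Multiset.mem_toFinset, mem_roots hp0]
          simpa using hj
      _ ≤ p.natDegree := (Multiset.toFinset_card_le _).trans (card_roots' p)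
      _ ≤ 3 := hp
  have h2 := Finset.card_filter_add_card_filter_not (s := (Finset.univ : Finset (Fin 6)))
    (fun j => p.eval (x j) = 0)
  simp only [Finset.card_univ, Fintype.card_fin] at h2
  simp only [ne_eq]
  omega

theorem code_exists {F : Type*} [Field F] [DecidableEq F] (f h : F[X]) (hf : f.natDegree ≤ 6)
    (hh : h.natDegree = 3) (hcop : IsCoprime f h) (hsq : Squarefree f) (hu : ¬ IsUnit f)
    (h2 : (2 : F) ≠ 0) (t m : ℕ) (ht : 1 ≤ t) (htm : t < m) (α : Fin m → F)
    (hα : Function.Injective α) (x : Fin m → Fin 6 → F) (hx : ∀ b, Function.Injective (x b))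
    (hcurve : ∀ b j, (α b * h.eval (x b j)) ^ 2 = f.eval (x b j))
    (hfx : ∀ b j, f.eval (x b j) ≠ 0) :
    ExistsOptimalLRC F (6 * m) (4 * t + 1) (6 * (m - t)) 4 3 := by
  classical
  let e : Fin (6 * m) ≃ Fin m × Fin 6 := (finCongr (mul_comm 6 m)).trans finProdFinEquiv.symm
  let ev : ((Fin t → degreeLT F 4) × F) →ₗ[F] (Fin (6 * m) → F) :=
    { toFun := fun w i => (∑ k : Fin t, (w.1 k : F[X]).eval (x (e i).1 (e i).2) * α (e i).1 ^ (k : ℕ))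
        + w.2 * α (e i).1 ^ t * h.eval (x (e i).1 (e i).2)
      map_add' := by
        intro v w
        ext i
        simp only [Prod.fst_add, Prod.snd_add, Pi.add_apply, Submodule.coe_add, eval_add, add_mul,
          Finset.sum_add_distrib]
        ring
      map_smul' := by
        intro c w
        ext i
        simp only [Prod.smul_fst, Prod.smul_snd, Pi.smul_apply, Submodule.coe_smul, eval_smul,
          smul_eq_mul, RingHom.id_apply, mul_add, Finset.mul_sum, mul_assoc] }
  let pp : ((Fin t → degreeLT F 4) × F) → ℕ → F[X] := fun w k => if hk : k < t then (w.1 ⟨k, hk⟩ : F[X]) else 0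
  have hev : ∀ w i, ev w i = (∑ k ∈ Finset.range t, (pp w k).eval (x (e i).1 (e i).2) *
      α (e i).1 ^ k) + w.2 * α (e i).1 ^ t * h.eval (x (e i).1 (e i).2) := by
    intro w i
    rw [Finset.sum_range]
    simp [ev, pp]
  have hd4 : ∀ q : degreeLT F 4, (q : F[X]).natDegree ≤ 3 := by
    intro q
    have := mem_degreeLT.1 q.2
    rw [natDegree_le_iff_coeff_eq_zero]
    intro N hN
    exact (degree_lt_iff_coeff_zero _ _).1 this N hN
  have hpp : ∀ w k, (pp w k).natDegree ≤ 3 := by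
    intro w k
    simp only [pp]
    split_ifs
    · exact hd4 _
    · simp
  have hne : ∀ w : ((Fin t → degreeLT F 4) × F), w ≠ 0 → w.2 ≠ 0 ∨ ∃ i < t, pp w i ≠ 0 := by
    intro w hw
    by_contra hcon
    push Not at hcon
    apply hw
    refine Prod.ext (funext fun k => Subtype.ext ?_) hcon.1
    have := hcon.2 k k.2
    simpa [pp] using this
  have hzero : ∀ w : ((Fin t → degreeLT F 4) × F), w ≠ 0 → (Finset.univ.filter fun i => ev w i = 0).card ≤ 6 * t := by
    intro w hw
    refine zero_count f h (pp w) w.2 hf hh hcop hsq hu h2 (hpp w) t ht (hne w hw) _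
      (fun i => x (e i).1 (e i).2) (fun i => α (e i).1) ?_ (fun i _ => hcurve _ _)
      (fun i _ => hfx _ _) ?_
    · intro i _ j _ h1 h2
      have h3 := hα h2
      apply e.injective
      refine Prod.ext h3 ?_
      rw [h3] at h1
      exact hx _ h1
    · intro i hi
      rw [← hev]
      exact (Finset.mem_filter.1 hi).2
  have hsplit : ∀ v : Fin (6 * m) → F, (Finset.univ.filter fun i => v i = 0).card + hammingWt v = 6 * m := by
    intro v
    have := Finset.card_filter_add_card_filter_not (s := (Finset.univ : Finset (Fin (6 * m))))
      (fun j => v j = 0)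
    simpa [hammingWt] using this
  have hwt : ∀ w : ((Fin t → degreeLT F 4) × F), w ≠ 0 → 6 * (m - t) ≤ hammingWt (ev w) := by
    intro w hw
    have := hzero w hw
    have := hsplit (ev w)
    omega
  have hinj : Function.Injective ev := by
    rw [injective_iff_map_eq_zero]
    intro w hw
    by_contra h0
    have := hwt w h0
    rw [hw] at this
    simp [hammingWt] at this
    omega
  refine ⟨LinearMap.range ev, ?_, ⟨?_, ?_⟩, ?_, ?_⟩
  · rw [LinearMap.finrank_range_of_inj hinj]
    have hfr : Module.finrank F (degreeLT F 4) = 4 := by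
      rw [(degreeLTEquiv F 4).finrank_eq]; simp
    have : Module.Finite F (degreeLT F 4) := Module.Finite.equiv (degreeLTEquiv F 4).symm
    rw [Module.finrank_prod, Module.finrank_pi_fintype]
    simp [hfr, mul_comm]
  · rintro _ ⟨w, rfl⟩ h0
    exact hwt w (by rintro rfl; simp at h0)
  · -- codeword of exact weight
    let g : F[X] := ∏ b ∈ Finset.univ.filter (fun b : Fin m => (b : ℕ) < t), (X - C (α b))
    have hcardt : (Finset.univ.filter (fun b : Fin m => (b : ℕ) < t)).card = t := by
      have : (Finset.univ.filter (fun b : Fin m => (b : ℕ) < t)) =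
          Finset.univ.map (Fin.castLEEmb htm.le) := by
        ext b
        simp only [Finset.mem_filter, Finset.mem_univ, true_and, Finset.mem_map]
        constructor
        · intro hb; exact ⟨⟨b, hb⟩, Fin.ext rfl⟩
        · rintro ⟨a, rfl⟩; exact a.2
      rw [this]; simp
    have hgd : g.natDegree = t := by
      rw [natDegree_prod_of_monic _ _ (fun b _ => monic_X_sub_C _)]
      simp [hcardt]
    have hh4 : h ∈ degreeLT F 4 := by
      rw [mem_degreeLT]
      refine (degree_le_natDegree).trans_lt ?_
      rw [hh]; norm_num
    let w : ((Fin t → degreeLT F 4) × F) := (fun k => g.coeff k • ⟨h, hh4⟩, g.coeff t)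
    have hw : ∀ i, ev w i = g.eval (α (e i).1) * h.eval (x (e i).1 (e i).2) := by
      intro i
      rw [eval_eq_sum_range, hgd, Finset.sum_range_succ, Finset.sum_range, add_mul, Finset.sum_mul]
      simp only [ev, w, LinearMap.coe_mk, AddHom.coe_mk, Submodule.coe_smul, eval_smul, smul_eq_mul]
      congr 1
      refine Finset.sum_congr rfl fun k _ => ?_
      ring
    have hhx : ∀ b j, h.eval (x b j) ≠ 0 := by
      intro b j h0
      have := hcurve b j
      rw [h0] at this
      exact hfx b j (by rw [← this]; ring)
    have hgz : ∀ b, g.eval (α b) = 0 ↔ (b : ℕ) < t := by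
      intro b
      simp only [g, eval_prod, Finset.prod_eq_zero_iff, Finset.mem_filter, Finset.mem_univ, true_and,
        eval_sub, eval_X, eval_C, sub_eq_zero]
      constructor
      · rintro ⟨a, ha, hab⟩; rw [hα hab]; exact ha
      · intro hb; exact ⟨b, hb, rfl⟩
    have hzc : (Finset.univ.filter fun i => ev w i = 0).card = 6 * t := by
      have : (Finset.univ.filter fun i => ev w i = 0) =
          ((Finset.univ.filter (fun b : Fin m => (b : ℕ) < t)) ×ˢ
            (Finset.univ : Finset (Fin 6))).map e.symm.toEmbedding := by
        ext i
        simp only [Finset.mem_filter, Finset.mem_univ, true_and, Finset.mem_map_equiv, hw,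
          mul_eq_zero, hhx, or_false, hgz, Finset.mem_product, and_true, Equiv.symm_symm]
      rw [this, Finset.card_map, Finset.card_product, hcardt]
      simp [mul_comm]
    have hs := hsplit (ev w)
    refine ⟨ev w, ⟨w, rfl⟩, ?_, ?_⟩
    · intro h0
      rw [h0] at hs hzc
      simp at hzc
      omega
    · omega
  · -- locality
    intro i
    refine ⟨(Finset.univ.map ⟨fun j => e.symm ((e i).1, j), ?_⟩), ?_, ?_, ?_⟩
    · intro j k hjk
      have := e.symm.injective hjk
      exact (Prod.ext_iff.1 this).2
    · rw [Finset.mem_map]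
      exact ⟨(e i).2, Finset.mem_univ _, e.symm_apply_apply i⟩
    · simp
    · rintro _ ⟨w, rfl⟩ ⟨j, hj, hj0⟩
      let P : F[X] := (∑ k ∈ Finset.range t, C (α (e i).1 ^ k) * pp w k)
        + C (w.2 * α (e i).1 ^ t) * h
      have hP : ∀ k, ev w (e.symm ((e i).1, k)) = P.eval (x (e i).1 k) := by
        intro k
        rw [hev]
        simp only [P, eval_add, eval_mul, eval_C, eval_finsetSum, Equiv.apply_symm_apply]
        congr 1
        exact Finset.sum_congr rfl fun k _ => mul_comm _ _
      have hPd : P.natDegree ≤ 3 := by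
        refine natDegree_add_le_of_degree_le
          (natDegree_sum_le_of_forall_le _ _ fun k _ => (natDegree_C_mul_le _ _).trans (hpp w k))
          ((natDegree_C_mul_le _ _).trans hh.le)
      rw [Finset.mem_map] at hj
      obtain ⟨k, -, hk⟩ := hj
      have hk' : e.symm ((e i).1, k) = j := hk
      have := fin_zero_count P hPd (x (e i).1) (hx _) ⟨k, by rw [← hP, hk']; exact hj0⟩
      rw [Finset.filter_map, Finset.card_map]
      convert this using 2
      ext k
      simp only [Finset.mem_filter, Finset.mem_univ, true_and, Function.comp]
      rw [← hP]; rfl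
  · unfold SingletonOptimal
    have : (4 * t + 1 + 4 - 1) / 4 = t + 1 := by omega
    rw [this]
    push_cast [Nat.cast_sub htm.le]
    ring
end LRCCode

namespace LRCCode
open Polynomial

lemma mobius {F : Type*} [Field F] (i r s x X : F) (hi : i ^ 2 = -1) (hr : r ^ 2 = 3)
    (hs : s ^ 2 = -2) (hX : (1 + i) * ((1 + r) * s - 2 * X) = x * (2 * (s + (1 + r) * X))) :
    512 * (1 + i) * (1 + r) ^ 3 * (X ^ 6 + 5 * s * X ^ 3 + 1) =
      (2 * (s + (1 + r) * X)) ^ 6 * (x ^ 5 - x) := by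
  obtain ⟨u, hu⟩ : ∃ u, u = (1 + r) * s - 2 * X := ⟨_, rfl⟩
  obtain ⟨v, hv⟩ : ∃ v, v = s + (1 + r) * X := ⟨_, rfl⟩
  rw [← hu, ← hv] at hX
  have h4 : (1 + i) ^ 4 = -4 := by
    linear_combination (i ^ 2 + 4 * i + 5) * hi
  have huv : u * v = -2 * (1 + r) * (X ^ 2 - s * X + 1) := by
    rw [hu, hv]; linear_combination (1 + r) * hs + s * X * hr
  have hsum : u ^ 2 + 2 * v ^ 2 = (12 + 4 * r) * (X ^ 2 - 1) := by
    rw [hu, hv]; linear_combination ((1 + r) ^ 2 + 2) * hs + (-2 + 2 * X ^ 2) * hr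
  have e1 : (2 * v) ^ 6 * (x ^ 5 - x) = (x * (2 * v)) * (2 * v) * ((x * (2 * v)) ^ 4 - (2 * v) ^ 4) := by
    ring
  rw [← hv, e1, ← hX]
  have e2 : (1 + i) * u * (2 * v) * (((1 + i) * u) ^ 4 - (2 * v) ^ 4) =
      -8 * (1 + i) * (u * v) * ((u ^ 2 + 2 * v ^ 2) ^ 2 - 4 * (u * v) ^ 2) := by
    linear_combination 2 * (1 + i) * u ^ 5 * v * h4
  rw [e2, huv, hsum]
  have h3 : (12 + 4 * r) ^ 2 = 48 * (1 + r) ^ 2 := by linear_combination (-32) * hr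
  have e3 : ((12 + 4 * r) * (X ^ 2 - 1)) ^ 2 = 48 * (1 + r) ^ 2 * (X ^ 2 - 1) ^ 2 := by
    rw [mul_pow, h3]
  rw [e3]
  have e4 : 2 * (X ^ 6 + 5 * s * X ^ 3 + 1) =
      (X ^ 2 - s * X + 1) * (3 * (X ^ 2 - 1) ^ 2 - (X ^ 2 - s * X + 1) ^ 2) := by
    linear_combination (3 * X ^ 2 + 3 * X ^ 4 - s * X ^ 3) * hs
  linear_combination 256 * (1 + i) * (1 + r) ^ 3 * e4

lemma count_S {F : Type*} [Field F] [Fintype F] [DecidableEq F] (i r s ε : F)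
    (hi : i ^ 2 = -1) (hr : r ^ 2 = 3) (hs : s ^ 2 = -2) (h2 : (2 : F) ≠ 0) (h3 : (3 : F) ≠ 0) :
    (Finset.univ.filter fun x : F => x ^ 5 - x ≠ 0 ∧ IsSquare (ε * (x ^ 5 - x))).card ≤
    (Finset.univ.filter fun X : F => (X ≠ 0 ∧ X ^ 6 ≠ 1) ∧ X ^ 6 + 5 * s * X ^ 3 + 1 ≠ 0 ∧
      IsSquare (ε * (512 * (1 + i) * (1 + r) ^ 3) * (X ^ 6 + 5 * s * X ^ 3 + 1))).card + 8 := by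
  have hs0 : s ≠ 0 := by rintro rfl; apply h2; linear_combination hs
  have hi0 : 1 + i ≠ 0 := by
    intro h; apply h2; linear_combination (1 - i) * h + hi
  have hr0 : 1 + r ≠ 0 := by
    intro h; apply h2; linear_combination (r - 1) * h - hr
  have hr3 : 3 + r ≠ 0 := by
    intro h; apply mul_ne_zero h2 h3; linear_combination (3 - r) * h + hr
  set A := Finset.univ.filter fun x : F => x ^ 5 - x ≠ 0 ∧ IsSquare (ε * (x ^ 5 - x)) with hA
  set S := Finset.univ.filter fun X : F => X ^ 6 + 5 * s * X ^ 3 + 1 ≠ 0 ∧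
      IsSquare (ε * (512 * (1 + i) * (1 + r) ^ 3) * (X ^ 6 + 5 * s * X ^ 3 + 1)) with hS
  set d : F → F := fun x => (1 + r) * x + (1 + i) with hd
  let φ : F → F := fun x => s * ((1 + i) * (1 + r) - 2 * x) / (2 * d x)
  have hφ1 : ∀ x, d x ≠ 0 → 2 * (s + (1 + r) * φ x) = s * (1 + i) * (2 * (3 + r)) / d x := by
    intro x hx
    simp only [φ]
    field_simp
    simp only [hd]
    linear_combination (1 + i) * hr
  have hφ2 : ∀ x, d x ≠ 0 →
      (1 + i) * ((1 + r) * s - 2 * φ x) = x * (2 * (s + (1 + r) * φ x)) := by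
    intro x hx
    rw [hφ1 x hx]
    simp only [φ]
    field_simp
    simp only [hd]
    linear_combination x * hr
  have hD : ∀ x, d x ≠ 0 → 2 * (s + (1 + r) * φ x) ≠ 0 := by
    intro x hx
    rw [hφ1 x hx]
    exact div_ne_zero (mul_ne_zero (mul_ne_zero hs0 hi0) (mul_ne_zero h2 hr3)) hx
  have h1 : A.card ≤ (A.filter fun x => d x ≠ 0).card + 1 := by
    have h := Finset.card_filter_add_card_filter_not (s := A) (fun x => d x ≠ 0)
    have : (A.filter fun x => ¬ d x ≠ 0).card ≤ 1 := by
      rw [Finset.card_le_one]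
      intro a ha b hb
      simp only [Finset.mem_filter, not_not, hd] at ha hb
      apply mul_left_cancel₀ hr0
      linear_combination ha.2 - hb.2
    omega
  have hS1 : (A.filter fun x => d x ≠ 0).card ≤ S.card := by
    apply Finset.card_le_card_of_injOn φ
    · intro x hx
      simp only [hA, Finset.coe_filter, Finset.mem_filter, Finset.mem_univ, true_and,
        Set.mem_ofPred_eq] at hx
      obtain ⟨⟨hx0, hsq⟩, hdx⟩ := hx
      have hm := mobius i r s x (φ x) hi hr hs (hφ2 x hdx)
      simp only [hS, Finset.coe_filter, Finset.mem_univ, true_and, Set.mem_ofPred_eq]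
      constructor
      · intro h0
        rw [h0, mul_zero] at hm
        exact mul_ne_zero (pow_ne_zero 6 (hD x hdx)) hx0 hm.symm
      · rw [mul_assoc ε, hm]
        obtain ⟨y, hy⟩ := hsq
        refine ⟨(2 * (s + (1 + r) * φ x)) ^ 3 * y, ?_⟩
        generalize 2 * (s + (1 + r) * φ x) = w
        linear_combination w ^ 6 * hy
    · intro x hx y hy hxy
      have hdx := (Finset.mem_filter.1 (Finset.mem_coe.1 hx)).2
      have hdy := (Finset.mem_filter.1 (Finset.mem_coe.1 hy)).2
      have e1 := hφ2 x hdx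
      have e2 := hφ2 y hdy
      rw [← hxy] at e2
      exact mul_right_cancel₀ (hD x hdx) (e1.symm.trans e2)
  have hS2 : S.card ≤ (Finset.univ.filter fun X : F => (X ≠ 0 ∧ X ^ 6 ≠ 1) ∧
      X ^ 6 + 5 * s * X ^ 3 + 1 ≠ 0 ∧
      IsSquare (ε * (512 * (1 + i) * (1 + r) ^ 3) * (X ^ 6 + 5 * s * X ^ 3 + 1))).card + 7 := by
    have h := Finset.card_filter_add_card_filter_not (s := S) (fun X => X ≠ 0 ∧ X ^ 6 ≠ 1)
    have e : S.filter (fun X => X ≠ 0 ∧ X ^ 6 ≠ 1) = (Finset.univ.filter fun X : F =>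
      (X ≠ 0 ∧ X ^ 6 ≠ 1) ∧ X ^ 6 + 5 * s * X ^ 3 + 1 ≠ 0 ∧
      IsSquare (ε * (512 * (1 + i) * (1 + r) ^ 3) * (X ^ 6 + 5 * s * X ^ 3 + 1))) := by
      ext X; simp only [hS, Finset.mem_filter, Finset.mem_univ, true_and]
      exact and_comm
    rw [← e]
    have : (S.filter (fun X => ¬ (X ≠ 0 ∧ X ^ 6 ≠ 1))).card ≤ 7 := by
      let g : F[X] := X ^ 7 - X
      have hdg : g.natDegree = 7 := by simp only [g]; compute_degree!
      have hg : g ≠ 0 := by intro h; rw [h] at hdg; simp at hdg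
      calc (S.filter (fun X => ¬ (X ≠ 0 ∧ X ^ 6 ≠ 1))).card ≤ g.roots.toFinset.card := by
            apply Finset.card_le_card
            intro x hx
            rw [Multiset.mem_toFinset, mem_roots hg]
            have hx := (Finset.mem_filter.1 hx).2
            simp only [g, IsRoot.def, eval_sub, eval_pow, eval_X]
            by_cases h0 : x = 0
            · simp [h0]
            · have : x ^ 6 = 1 := by
                by_contra h
                exact hx ⟨h0, h⟩
              rw [pow_succ, this, one_mul, sub_self]
        _ ≤ g.natDegree := (Multiset.toFinset_card_le _).trans (card_roots' g)
        _ = 7 := hdg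
    omega
  omega

lemma six_inj {F : Type*} [Field F] (ζ x : F) (hζ : ζ ^ 3 = 1) (hζ1 : ζ ≠ 1) (hx : x ≠ 0)
    (hx6 : x ^ 6 ≠ 1) :
    Function.Injective (![x, ζ * x, ζ ^ 2 * x, x⁻¹, ζ * x⁻¹, ζ ^ 2 * x⁻¹] : Fin 6 → F) := by
  have hζ0 : ζ ≠ 0 := by rintro rfl; simp at hζ
  have hζ2 : ζ ^ 2 ≠ 1 := by
    intro h; apply hζ1; linear_combination hζ - ζ * h
  have in1 : ∀ a : F, a ≠ 0 → a ≠ ζ * a := fun a ha h =>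
    hζ1 (mul_right_cancel₀ ha (by rw [one_mul]; exact h.symm))
  have in2 : ∀ a : F, a ≠ 0 → a ≠ ζ ^ 2 * a := fun a ha h =>
    hζ2 (mul_right_cancel₀ ha (by rw [one_mul]; exact h.symm))
  have in3 : ∀ a : F, a ≠ 0 → ζ * a ≠ ζ ^ 2 * a := fun a ha h =>
    in1 (ζ * a) (mul_ne_zero hζ0 ha) (by linear_combination h)
  have cr : ∀ u v : F, u ^ 3 = x ^ 3 → v ^ 3 = (x⁻¹) ^ 3 → u ≠ v := by
    rintro u v h1 h2 rfl
    rw [h1] at h2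
    apply hx6
    have : x ^ 6 = x ^ 3 * x ^ 3 := by ring
    rw [this]
    nth_rewrite 1 [h2]
    rw [← mul_pow, inv_mul_cancel₀ hx, one_pow]
  have c1 : ∀ a : F, (ζ * a) ^ 3 = a ^ 3 := fun a => by rw [mul_pow, hζ, one_mul]
  have c2 : ∀ a : F, (ζ ^ 2 * a) ^ 3 = a ^ 3 := fun a => by
    linear_combination a ^ 3 * (ζ ^ 3 + 1) * hζ
  have hxi := inv_ne_zero hx
  rw [← List.nodup_ofFn]
  have hl : List.ofFn (![x, ζ * x, ζ ^ 2 * x, x⁻¹, ζ * x⁻¹, ζ ^ 2 * x⁻¹] : Fin 6 → F) =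
    [x, ζ * x, ζ ^ 2 * x, x⁻¹, ζ * x⁻¹, ζ ^ 2 * x⁻¹] := by
    simp [List.ofFn_succ]
  rw [hl]
  simp only [List.nodup_cons, List.mem_cons, List.not_mem_nil, or_false, not_or, not_false_eq_true,
    List.nodup_nil, and_true]
  exact ⟨⟨in1 _ hx, in2 _ hx, cr _ _ rfl rfl, cr _ _ rfl (c1 _), cr _ _ rfl (c2 _)⟩,
    ⟨in3 _ hx, cr _ _ (c1 _) rfl, cr _ _ (c1 _) (c1 _), cr _ _ (c1 _) (c2 _)⟩,
    ⟨cr _ _ (c2 _) rfl, cr _ _ (c2 _) (c1 _), cr _ _ (c2 _) (c2 _)⟩,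
    ⟨in1 _ hxi, in2 _ hxi⟩, in3 _ hxi⟩

lemma f_facts {F : Type*} [Field F] (a c : F) (ha : a ^ 2 = -50) (hc : c ≠ 0)
    (h2 : (2 : F) ≠ 0) (h3 : (3 : F) ≠ 0) :
    (C c * (X ^ 6 + C a * X ^ 3 + 1) : F[X]).natDegree = 6 ∧
    IsCoprime (C c * (X ^ 6 + C a * X ^ 3 + 1) : F[X]) (X ^ 3 + 1) ∧
    Squarefree (C c * (X ^ 6 + C a * X ^ 3 + 1) : F[X]) := by
  have hunit : IsUnit (C c : F[X]) := isUnit_C.2 hc.isUnit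
  have ha2 : a - 2 ≠ 0 := by
    intro h
    have h54 : (2 : F) * 3 ^ 3 = 0 := by linear_combination ha - (a + 2) * h
    exact mul_ne_zero h2 (pow_ne_zero 3 h3) h54
  refine ⟨?_, ?_, ?_⟩
  · rw [natDegree_C_mul hc]; compute_degree!
  · rw [isCoprime_mul_unit_left_left hunit]
    refine ⟨C (-(a - 2)⁻¹), C ((a - 2)⁻¹) * (X ^ 3 + C a - 1), ?_⟩
    have : (C ((a - 2)⁻¹) * (C a - 2) : F[X]) = 1 := by
      have : (C a - 2 : F[X]) = C (a - 2) := by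
        rw [C_sub, show (C (2:F) : F[X]) = 2 from map_ofNat C 2]
      rw [this, ← C_mul, inv_mul_cancel₀ ha2, C_1]
    rw [C_neg]
    linear_combination this
  · rw [(associated_unit_mul_left (X ^ 6 + C a * X ^ 3 + 1 : F[X]) _ hunit).squarefree_iff]
    apply Polynomial.Separable.squarefree
    have h162 : (162 : F) ≠ 0 := by
      have : (162 : F) = 2 * 3 ^ 4 := by norm_num
      rw [this]; exact mul_ne_zero h2 (pow_ne_zero 4 h3)
    refine ⟨C (162⁻¹ : F) * (162 - C (6 * a) * X ^ 3), C (162⁻¹ : F) * ((C a * X ^ 3 - 52) * X), ?_⟩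
    have hd : derivative (X ^ 6 + C a * X ^ 3 + 1 : F[X]) = 6 * X ^ 5 + 3 * C a * X ^ 2 := by
      simp
      rw [show (C (5:F) : F[X]) = 5 from map_ofNat C 5, show (C (2:F) : F[X]) = 2 from map_ofNat C 2]
      ring
    have hinv : (C (162⁻¹ : F) * 162 : F[X]) = 1 := by
      rw [show (162 : F[X]) = C 162 from (map_ofNat C 162).symm, ← C_mul, inv_mul_cancel₀ h162, C_1]
    have ha' : (C a : F[X]) ^ 2 = -50 := by
      rw [← C_pow, ha, C_neg, show (C (50:F) : F[X]) = 50 from map_ofNat C 50]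
    have h6 : (C (6 * a) : F[X]) = 6 * C a := by
      rw [C_mul, show (C (6:F) : F[X]) = 6 from map_ofNat C 6]
    rw [hd, h6]
    linear_combination hinv + C (162⁻¹ : F) * (-3 * X ^ 6) * ha'
end LRCCode

namespace LRCCode
open Polynomial

lemma prime_facts (Q s : ℕ) (hQ : IsPrimePow Q)
    (hQmod : Q % 24 = 5 ∨ Q % 24 = 15 ∨ Q % 24 = 21 ∨ Q % 24 = 23) (hsodd : Odd s) (hs : 0 < s) :
    ∃ p e : ℕ, p.Prime ∧ p ≠ 2 ∧ p ≠ 3 ∧ e ≠ 0 ∧ Q ^ s = p ^ e ∧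
      (Q ^ s % 24 = 5 ∨ Q ^ s % 24 = 23) := by
  obtain ⟨p, k, hp, hk, rfl⟩ := (isPrimePow_nat_iff _).1 hQ
  have hp3 : p ≠ 3 := by
    rintro rfl
    have : ∀ j, 3 ^ (j + 1) % 24 = 3 ∨ 3 ^ (j + 1) % 24 = 9 := by
      intro j
      induction j with
      | zero => simp
      | succ j ih => rw [pow_succ]; omega
    have := this (k - 1)
    rw [show k - 1 + 1 = k by omega] at this
    omega
  have hp2 : p ≠ 2 := by
    rintro rfl
    have : 2 ∣ 2 ^ k := dvd_pow_self 2 (by omega)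
    omega
  have h3 : ¬ 3 ∣ p ^ k := by
    intro h
    exact hp3 ((Nat.prime_dvd_prime_iff_eq Nat.prime_three hp).1
      (Nat.prime_three.dvd_of_dvd_pow h)).symm
  refine ⟨p, k * s, hp, hp2, hp3, by positivity, (pow_mul _ _ _).symm, ?_⟩
  obtain ⟨j, rfl⟩ := hsodd
  have h1 : ((p ^ k) ^ (2 * j + 1)) % 24 = p ^ k % 24 := by
    have hsq : (p ^ k) ^ 2 % 24 = 1 := by
      have : p ^ k % 24 = 5 ∨ p ^ k % 24 = 23 := by omega
      rcases this with h | h <;> rw [Nat.pow_mod, h]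
    rw [pow_succ, pow_mul, Nat.mul_mod, Nat.pow_mod, hsq]
    simp
  rw [h1]
  omega

lemma field_elts {F : Type*} [Field F] [Fintype F] [DecidableEq F]
    (hc : Fintype.card F % 24 = 1) :
    ∃ i r s ζ : F, i ^ 2 = -1 ∧ r ^ 2 = 3 ∧ s ^ 2 = -2 ∧ ζ ^ 3 = 1 ∧ ζ ≠ 1 := by
  obtain ⟨i, hi⟩ := FiniteField.isSquare_neg_one_iff.2 (by omega : Fintype.card F % 4 ≠ 3)
  obtain ⟨s, hs⟩ := FiniteField.isSquare_neg_two_iff.2 (by omega :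
    Fintype.card F % 8 ≠ 5 ∧ Fintype.card F % 8 ≠ 7)
  have h3 : 3 ∣ Fintype.card Fˣ := by
    rw [Fintype.card_units]; omega
  have : Fact (Nat.Prime 3) := ⟨Nat.prime_three⟩
  obtain ⟨z, hz⟩ := exists_prime_orderOf_dvd_card 3 h3
  have hz3 : (z : F) ^ 3 = 1 := by
    have : z ^ 3 = 1 := by rw [← hz]; exact pow_orderOf_eq_one z
    rw [← Units.val_pow_eq_pow_val, this, Units.val_one]
  have hz1 : (z : F) ≠ 1 := by
    intro h
    have : z = 1 := Units.ext h
    rw [this, orderOf_one] at hz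
    omega
  have hq : (z : F) ^ 2 + z + 1 = 0 := by
    have : ((z : F) - 1) * ((z : F) ^ 2 + z + 1) = 0 := by linear_combination hz3
    exact (mul_eq_zero.1 this).resolve_left (sub_ne_zero.2 hz1)
  refine ⟨i, -i * (2 * z + 1), s, z, ?_, ?_, ?_, hz3, hz1⟩
  · rw [hi]; ring
  · linear_combination -(2 * (z:F) + 1) ^ 2 * hi - 4 * hq
  · rw [hs]; ring

lemma fiber_rel {F : Type*} [Field F] (a c α u v : F) (ha2 : a ≠ 2) (hc : c ≠ 0)
    (hu : (α * (u + 1)) ^ 2 = c * (u ^ 2 + a * u + 1))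
    (hv : (α * (v + 1)) ^ 2 = c * (v ^ 2 + a * v + 1)) : (v - u) * (u * v - 1) = 0 := by
  have h : (c * (a - 2)) * ((v - u) * (u * v - 1)) = 0 := by
    linear_combination (u + 1) ^ 2 * hv - (v + 1) ^ 2 * hu
  exact (mul_eq_zero.1 h).resolve_left (mul_ne_zero hc (sub_ne_zero.2 ha2))

lemma fiber_rel' {F : Type*} [Field F] (a c α u v : F) (ha2 : a ≠ 2) (hc : c ≠ 0)
    (hu : (α * (u ^ 3 + 1)) ^ 2 = c * (u ^ 6 + a * u ^ 3 + 1))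
    (hv : (α * (v ^ 3 + 1)) ^ 2 = c * (v ^ 6 + a * v ^ 3 + 1)) :
    (v ^ 3 - u ^ 3) * (u ^ 3 * v ^ 3 - 1) = 0 := by
  have hu6 : u ^ 6 = (u ^ 3) ^ 2 := by rw [← pow_mul]
  have hv6 : v ^ 6 = (v ^ 3) ^ 2 := by rw [← pow_mul]
  rw [hu6] at hu
  rw [hv6] at hv
  exact fiber_rel a c α _ _ ha2 hc hu hv

lemma root_aux {F : Type*} [Field F] (u v : F) (h : (v ^ 3 - u ^ 3) * (u ^ 3 * v ^ 3 - 1) = 0) :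
    u ^ 3 * v ^ 6 - (u ^ 6 + 1) * v ^ 3 + u ^ 3 = 0 := by
  linear_combination h

lemma alpha_count {F : Type*} [Field F] [Fintype F] [DecidableEq F] (a c : F) (ha2 : a ≠ 2)
    (hc : c ≠ 0) (h2 : (2 : F) ≠ 0) (S : Finset F)
    (hS : ∀ x ∈ S, (x ≠ 0 ∧ x ^ 6 ≠ 1) ∧ x ^ 6 + a * x ^ 3 + 1 ≠ 0 ∧
      IsSquare (c * (x ^ 6 + a * x ^ 3 + 1))) :
    ∃ T : Finset F, S.card ≤ 3 * T.card ∧ ∀ α ∈ T, ∃ x ∈ S,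
      (α * (x ^ 3 + 1)) ^ 2 = c * (x ^ 6 + a * x ^ 3 + 1) := by
  set Pts : Finset (F × F) := (S ×ˢ Finset.univ).filter
    fun z => (z.2 * (z.1 ^ 3 + 1)) ^ 2 = c * (z.1 ^ 6 + a * z.1 ^ 3 + 1) with hP
  have hmem : ∀ z, z ∈ Pts ↔ z.1 ∈ S ∧
      (z.2 * (z.1 ^ 3 + 1)) ^ 2 = c * (z.1 ^ 6 + a * z.1 ^ 3 + 1) := by
    intro z; simp [hP]
  have hx1 : ∀ x ∈ S, x ^ 3 + 1 ≠ 0 := by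
    intro x hx h
    apply (hS x hx).1.2
    linear_combination (x ^ 3 - 1) * h
  have hlow : 2 * S.card ≤ Pts.card := by
    refine Finset.mul_card_image_le_card_of_maps_to (f := Prod.fst)
      (fun z hz => ((hmem z).1 hz).1) 2 ?_
    intro x hx
    obtain ⟨⟨h0, h6⟩, hf, y, hy⟩ := hS x hx
    have h1 := hx1 x hx
    have hy0 : y ≠ 0 := by
      rintro rfl
      rw [mul_zero] at hy
      exact mul_ne_zero hc hf hy
    have hα : ∀ w : F, w ^ 2 = y ^ 2 → (x, w / (x ^ 3 + 1)) ∈ Pts.filter fun z => z.1 = x := by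
      intro w hw
      refine Finset.mem_filter.2 ⟨(hmem _).2 ⟨hx, ?_⟩, rfl⟩
      simp only
      rw [div_mul_cancel₀ _ h1, hw, hy]
      ring
    have : ({(x, y / (x ^ 3 + 1)), (x, (-y) / (x ^ 3 + 1))} : Finset (F × F)) ⊆
        Pts.filter fun z => z.1 = x := by
      intro z hz
      rcases Finset.mem_insert.1 hz with rfl | hz
      · exact hα _ rfl
      · rw [Finset.mem_singleton.1 hz]
        exact hα _ (by ring)
    refine le_trans ?_ (Finset.card_le_card this)
    rw [Finset.card_pair]
    intro h
    have h := (Prod.mk.inj h).2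
    rw [div_left_inj' h1] at h
    exact mul_ne_zero h2 hy0 (by linear_combination h)
  refine ⟨Pts.image Prod.snd, ?_, ?_⟩
  · have hup : Pts.card ≤ 6 * (Pts.image Prod.snd).card := by
      apply Finset.card_le_mul_card_image
      intro α hα
      obtain ⟨z, hz, rfl⟩ := Finset.mem_image.1 hα
      obtain ⟨hzS, hze⟩ := (hmem z).1 hz
      have hz0 : z.1 ^ 3 ≠ 0 := pow_ne_zero 3 (hS _ hzS).1.1
      let g : F[X] := C (z.1 ^ 3) * X ^ 6 - C (z.1 ^ 6 + 1) * X ^ 3 + C (z.1 ^ 3)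
      have hdg : g.natDegree = 6 := by
        simp only [g]; compute_degree!
        exact (hS _ hzS).1.1
      have hg : g ≠ 0 := by intro h; rw [h] at hdg; simp at hdg
      calc (Pts.filter fun w => w.2 = z.2).card ≤ g.roots.toFinset.card := by
            apply Finset.card_le_card_of_injOn Prod.fst
            · intro w hw
              obtain ⟨hw1, hw2⟩ := Finset.mem_filter.1 (Finset.mem_coe.1 hw)
              obtain ⟨hwS, hwe⟩ := (hmem w).1 hw1
              rw [Finset.mem_coe, Multiset.mem_toFinset, mem_roots hg]
              rw [hw2] at hwe
              have := fiber_rel' a c z.2 z.1 w.1 ha2 hc hze hwe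
              simp only [g, IsRoot.def, eval_sub, eval_add, eval_mul, eval_pow, eval_X, eval_C]
              exact root_aux _ _ this
            · intro w hw w' hw' h
              have e1 := (Finset.mem_filter.1 (Finset.mem_coe.1 hw)).2
              have e2 := (Finset.mem_filter.1 (Finset.mem_coe.1 hw')).2
              exact Prod.ext h (e1.trans e2.symm)
        _ ≤ g.natDegree := (Multiset.toFinset_card_le _).trans (card_roots' g)
        _ = 6 := hdg
    omega
  · intro α hα
    obtain ⟨z, hz, rfl⟩ := Finset.mem_image.1 hα
    obtain ⟨hzS, hze⟩ := (hmem z).1 hz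
    exact ⟨z.1, hzS, hze⟩
end LRCCode

namespace LRCCode
open Polynomial
lemma ne_zero_of_prime {F : Type*} [Field F] (p l : ℕ) [CharP F p] (hp : p.Prime) (hl : l.Prime)
    (h : p ≠ l) : ((l : ℕ) : F) ≠ 0 := by
  intro h0
  exact h ((Nat.prime_dvd_prime_iff_eq hp hl).1 ((CharP.cast_eq_zero_iff F p l).1 h0))

lemma final_field {F : Type*} [Field F] [Fintype F] [DecidableEq F]
    (i r s ζ ε : F) (hi : i ^ 2 = -1) (hr : r ^ 2 = 3) (hs : s ^ 2 = -2) (hζ : ζ ^ 3 = 1)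
    (hζ1 : ζ ≠ 1) (hε : ε ≠ 0) (h2 : (2 : F) ≠ 0) (h3 : (3 : F) ≠ 0)
    (t m P : ℕ) (ht : 1 ≤ t) (htm : t < m)
    (hcount : Fintype.card F + P ≤ 2 * (Finset.univ.filter fun x : F => x ^ 5 - x ≠ 0 ∧
      IsSquare (ε * (x ^ 5 - x))).card + 5)
    (hm : 6 * m + 19 < Fintype.card F + P) :
    ExistsOptimalLRC F (6 * m) (4 * t + 1) (6 * (m - t)) 4 3 := by
  have hS := count_S i r s ε hi hr hs h2 h3
  have hi0 : 1 + i ≠ 0 := by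
    intro h; apply h2; linear_combination (1 - i) * h + hi
  have hr0 : 1 + r ≠ 0 := by
    intro h; apply h2; linear_combination (r - 1) * h - hr
  obtain ⟨c, hcdef⟩ : ∃ c, c = ε * (512 * (1 + i) * (1 + r) ^ 3) := ⟨_, rfl⟩
  obtain ⟨a, hadef⟩ : ∃ a, a = 5 * s := ⟨_, rfl⟩
  have h512 : (512 : F) ≠ 0 := by
    rw [show (512 : F) = 2 ^ 9 by norm_num]; exact pow_ne_zero 9 h2
  have hc : c ≠ 0 := by
    rw [hcdef]
    exact mul_ne_zero hε (mul_ne_zero (mul_ne_zero h512 hi0) (pow_ne_zero 3 hr0))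
  have ha : a ^ 2 = -50 := by rw [hadef]; linear_combination 25 * hs
  have ha2 : a ≠ 2 := by
    intro h
    have h54 : (2 : F) * 3 ^ 3 = 0 := by linear_combination ha - (a + 2) * h
    exact mul_ne_zero h2 (pow_ne_zero 3 h3) h54
  rw [← hcdef, ← hadef] at hS
  obtain ⟨T, hT, hTx⟩ := alpha_count a c ha2 hc h2 (Finset.univ.filter fun X : F =>
    (X ≠ 0 ∧ X ^ 6 ≠ 1) ∧ X ^ 6 + a * X ^ 3 + 1 ≠ 0 ∧
      IsSquare (c * (X ^ 6 + a * X ^ 3 + 1))) (fun x hx => (Finset.mem_filter.1 hx).2)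
  have hmT : m ≤ T.card := by omega
  obtain ⟨hdeg, hcop, hsqf⟩ := f_facts a c ha hc h2 h3
  choose! X0 hX0 hX0e using hTx
  let α : Fin m → F := fun b => (T.equivFin.symm (Fin.castLE hmT b) : F)
  have hαT : ∀ b, α b ∈ T := fun b => (T.equivFin.symm (Fin.castLE hmT b)).2
  have hα : Function.Injective α := by
    intro b b' h
    exact Fin.castLE_injective hmT (T.equivFin.symm.injective (Subtype.ext h))
  have hX : ∀ b, (X0 (α b) ≠ 0 ∧ X0 (α b) ^ 6 ≠ 1) ∧
      X0 (α b) ^ 6 + a * X0 (α b) ^ 3 + 1 ≠ 0 := fun b =>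
    have h := (Finset.mem_filter.1 (hX0 _ (hαT b))).2
    ⟨h.1, h.2.1⟩
  let x : Fin m → Fin 6 → F := fun b => ![X0 (α b), ζ * X0 (α b), ζ ^ 2 * X0 (α b),
    (X0 (α b))⁻¹, ζ * (X0 (α b))⁻¹, ζ ^ 2 * (X0 (α b))⁻¹]
  have hcube : ∀ b j, x b j ^ 3 = X0 (α b) ^ 3 ∨ x b j ^ 3 = (X0 (α b) ^ 3)⁻¹ := by
    intro b j
    have c1 : ∀ y : F, (ζ * y) ^ 3 = y ^ 3 := fun y => by rw [mul_pow, hζ, one_mul]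
    have c2 : ∀ y : F, (ζ ^ 2 * y) ^ 3 = y ^ 3 := fun y => by
      linear_combination y ^ 3 * (ζ ^ 3 + 1) * hζ
    fin_cases j
    · left; rfl
    · left; exact c1 _
    · left; exact c2 _
    · right; exact inv_pow _ _
    · right; exact (c1 _).trans (inv_pow _ _)
    · right; exact (c2 _).trans (inv_pow _ _)
  have hev : ∀ y : F, (C c * (X ^ 6 + C a * X ^ 3 + 1) : F[X]).eval y =
      c * ((y ^ 3) ^ 2 + a * y ^ 3 + 1) := by
    intro y; simp; left; ring
  have hinv : ∀ u : F, u ≠ 0 → (u⁻¹) ^ 2 + a * u⁻¹ + 1 = (u⁻¹) ^ 2 * (u ^ 2 + a * u + 1) := by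
    intro u hu; field_simp; ring_nf
  refine code_exists (C c * (X ^ 6 + C a * X ^ 3 + 1)) (X ^ 3 + 1) hdeg.le ?_ hcop hsqf ?_ h2
    t m ht htm α hα x ?_ ?_ ?_
  · compute_degree!
  · intro h
    have := natDegree_eq_zero_of_isUnit h
    omega
  · intro b
    exact six_inj ζ _ hζ hζ1 (hX b).1.1 (hX b).1.2
  · intro b j
    have he := hX0e _ (hαT b)
    have hu : X0 (α b) ^ 3 ≠ 0 := pow_ne_zero 3 (hX b).1.1
    have h6 : X0 (α b) ^ 6 = (X0 (α b) ^ 3) ^ 2 := by ring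
    rw [h6] at he
    rw [hev]
    simp only [eval_add, eval_pow, eval_X, eval_one]
    rcases hcube b j with h | h <;> rw [h]
    · exact he
    · rw [hinv _ hu]
      have e : (X0 (α b) ^ 3)⁻¹ + 1 = (X0 (α b) ^ 3)⁻¹ * (X0 (α b) ^ 3 + 1) := by
        rw [mul_add, inv_mul_cancel₀ hu, mul_one, add_comm]
      rw [e]
      linear_combination ((X0 (α b) ^ 3)⁻¹) ^ 2 * he
  · intro b j
    have hu : X0 (α b) ^ 3 ≠ 0 := pow_ne_zero 3 (hX b).1.1
    have hn : (X0 (α b) ^ 3) ^ 2 + a * X0 (α b) ^ 3 + 1 ≠ 0 := by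
      have := (hX b).2
      rwa [show X0 (α b) ^ 6 = (X0 (α b) ^ 3) ^ 2 by ring] at this
    rw [hev]
    apply mul_ne_zero hc
    rcases hcube b j with h | h <;> rw [h]
    · exact hn
    · rw [hinv _ hu]
      exact mul_ne_zero (pow_ne_zero 2 (inv_ne_zero hu)) hn
end LRCCode

/-- For a prime power `Q ≠ 5` with `Q ≡ 5, 15, 21, 23 (mod 24)`,
odd `s`, and `q = Q^(2s)`, for all `1 ≤ t < m ≤ 2⌈(q + 4Q^s - 25)/12⌉ - 1`, there
exists an optimal `(4, 3)`-LRC with parameters `[6m, 4t + 1, 6(m-t)]_q`. -/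
theorem stmt_8 (Q : ℕ) (hQ : IsPrimePow Q) (hQ5 : Q ≠ 5)
    (hQmod : Q % 24 = 5 ∨ Q % 24 = 15 ∨ Q % 24 = 21 ∨ Q % 24 = 23)
    (s : ℕ) (hs : 0 < s) (hsodd : Odd s) (q : ℕ) (hq : q = Q ^ (2 * s))
    (t m : ℕ) (ht : 1 ≤ t) (htm : t < m)
    (hm : (m : ℤ) ≤ 2 * ⌈((q : ℚ) + 4 * (Q : ℚ) ^ s - 25) / 12⌉ - 1)
    (F : Type*) [Field F] [Fintype F] [DecidableEq F] (hF : Fintype.card F = q) :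
    ExistsOptimalLRC F (6 * m) (4 * t + 1) (6 * (m - t)) 4 3 := by
  obtain ⟨p, e, hp, hp2, hp3, he, hPe, hP24⟩ := LRCCode.prime_facts Q s hQ hQmod hsodd hs
  have hcard : Fintype.card F = (p ^ e) ^ 2 := by
    rw [hF, hq, ← hPe, ← pow_mul, mul_comm s 2]
  have : Fact p.Prime := ⟨hp⟩
  have : CharP F p := by
    apply charP_of_card_eq_prime_pow (f := e * 2)
    rw [hcard, pow_mul]
  have h2 : (2 : F) ≠ 0 := by
    exact_mod_cast LRCCode.ne_zero_of_prime (F := F) p 2 hp Nat.prime_two hp2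
  have h3 : (3 : F) ≠ 0 := by
    exact_mod_cast LRCCode.ne_zero_of_prime (F := F) p 3 hp Nat.prime_three hp3
  have hc24 : Fintype.card F % 24 = 1 := by
    rw [hcard, ← hPe]
    rcases hP24 with h | h <;> rw [Nat.pow_mod, h]
  obtain ⟨i, r, σ, ζ, hi, hr, hσ, hζ, hζ1⟩ := LRCCode.field_elts (F := F) hc24
  obtain ⟨ε, hε, hcount⟩ := count_main (F := F) p e hp2 hcard (by rw [← hPe]; omega)
  refine LRCCode.final_field i r σ ζ ε hi hr hσ hζ hζ1 hε h2 h3 t m (4 * p ^ e) ht htm hcount ?_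
  have hlt := Int.ceil_lt_add_one (((q : ℚ) + 4 * (Q : ℚ) ^ s - 25) / 12)
  have hm' : (m : ℚ) ≤ 2 * (⌈((q : ℚ) + 4 * (Q : ℚ) ^ s - 25) / 12⌉ : ℚ) - 1 := by
    exact_mod_cast hm
  have hfin : (6 * (m : ℚ) + 19) < (q : ℚ) + 4 * (Q : ℚ) ^ s := by linarith
  rw [hF, ← hPe]
  exact_mod_cast hfin
end

section
/- Let g ≥ 2 be an integer such that 2g+1 is a prime power, let s be a positive integer, and let q = (2g+1)^{2s}. Let g' be an integer with −(g−1) ≤ g' ≤ g−1, set r = g+1−g' and δ = g+1+g'. Then for all integers t, m with 1 ≤ t < m ≤ ⌊(q + 2g(2g+1)^{s})/(2g+1)⌋, there exists an (r, δ)-LRC over F_q of length m(2g+1), dimension tr+1, and minimum distance at least (m−t)(2g+1) + min{0, 2g'+1}. In particular, if 0 ≤ g' ≤ g−1, there exists an optimal (r, δ)-LRC over F_q with parameters [m(2g+1), tr+1, (m−t)(2g+1)]_q. -/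
open Polynomial in
theorem aux_zeros {F : Type*} [Field F] [DecidableEq F] (l D : ℕ) (hl : Odd l) (L A B : F[X])
    (hL : L.natDegree = l) (hA : 2 * A.natDegree ≤ D) (hB : 2 * B.natDegree + l ≤ D)
    (hne : A ≠ 0 ∨ B ≠ 0) (S : Finset (F × F))
    (hS : ∀ p ∈ S, p.2 ^ 2 = L.eval p.1 ∧ A.eval p.1 + p.2 * B.eval p.1 = 0) :
    S.card ≤ D := by
  have hL0 : L ≠ 0 := by
    rintro rfl
    rw [natDegree_zero] at hL
    subst hL
    exact absurd hl (by decide)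
  have hN0 : A ^ 2 - L * B ^ 2 ≠ 0 := by
    intro h
    rw [sub_eq_zero] at h
    by_cases hB0 : B = 0
    · subst hB0
      rcases hne with h1 | h1
      · apply h1
        simpa using h
      · exact h1 rfl
    · have h2 := congrArg natDegree h
      rw [natDegree_pow, natDegree_mul hL0 (pow_ne_zero _ hB0), natDegree_pow, hL] at h2
      obtain ⟨k, rfl⟩ := hl
      omega
  set N := A ^ 2 - L * B ^ 2 with hN
  have hND : N.natDegree ≤ D := by
    refine (natDegree_sub_le _ _).trans (max_le ?_ ?_)
    · rw [natDegree_pow]; exact hA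
    · refine natDegree_mul_le.trans ?_
      rw [natDegree_pow]; omega
  have key : ∀ x ∈ S.image Prod.fst, (S.filter (fun p => p.1 = x)).card ≤ N.roots.count x := by
    intro x hx
    rw [count_roots, le_rootMultiplicity_iff hN0]
    by_cases h1 : (S.filter (fun p => p.1 = x)).card ≤ 1
    · refine (pow_dvd_pow _ h1).trans ?_
      rw [pow_one, dvd_iff_isRoot]
      obtain ⟨p, hp, rfl⟩ := Finset.mem_image.1 hx
      obtain ⟨h2, h3⟩ := hS p hp
      simp only [IsRoot, hN, eval_sub, eval_pow, eval_mul, ← h2]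
      linear_combination (A.eval p.1 - p.2 * B.eval p.1) * h3
    · push Not at h1
      obtain ⟨p, hp, p', hp', hpp⟩ := Finset.one_lt_card.1 h1
      have hle : (S.filter (fun p => p.1 = x)).card ≤ 2 := by
        have : S.filter (fun p => p.1 = x) ⊆ {(x, p.2), (x, -p.2)} := by
          intro z hz
          rw [Finset.mem_filter] at hz hp
          have e1 := (hS z hz.1).1
          have e2 := (hS p hp.1).1
          rw [hz.2] at e1
          rw [hp.2] at e2
          have := sq_eq_sq_iff_eq_or_eq_neg.1 (e1.trans e2.symm)
          rcases z with ⟨z1, z2⟩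
          simp only [Finset.mem_insert, Finset.mem_singleton, Prod.mk.injEq]
          rcases this with h | h
          · left; exact ⟨hz.2, h⟩
          · right; exact ⟨hz.2, h⟩
        exact (Finset.card_le_card this).trans Finset.card_le_two
      refine (pow_dvd_pow _ hle).trans ?_
      rw [Finset.mem_filter] at hp hp'
      have e1 := (hS p hp.1).2
      have e2 := (hS p' hp'.1).2
      rw [hp.2] at e1
      rw [hp'.2] at e2
      have hne2 : p.2 - p'.2 ≠ 0 := by
        intro h
        exact hpp (Prod.ext (hp.2.trans hp'.2.symm) (sub_eq_zero.1 h))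
      have hb : B.eval x = 0 := by
        have : (p.2 - p'.2) * B.eval x = 0 := by linear_combination e1 - e2
        exact (mul_eq_zero.1 this).resolve_left hne2
      have ha : A.eval x = 0 := by simpa [hb] using e1
      exact dvd_sub (pow_dvd_pow_of_dvd (dvd_iff_isRoot.2 ha) 2)
        ((pow_dvd_pow_of_dvd (dvd_iff_isRoot.2 hb) 2).mul_left _)
  calc S.card = ∑ x ∈ S.image Prod.fst, (S.filter (fun p => p.1 = x)).card :=
        Finset.card_eq_sum_card_image _ _
    _ ≤ ∑ x ∈ S.image Prod.fst, N.roots.count x := Finset.sum_le_sum key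
    _ ≤ ∑ x ∈ S.image Prod.fst ∪ N.roots.toFinset, N.roots.count x :=
        Finset.sum_le_sum_of_subset Finset.subset_union_left
    _ = N.roots.card := Multiset.sum_count_eq_card (by
        intro a ha; exact Finset.mem_union_right _ (Multiset.mem_toFinset.2 ha))
    _ ≤ D := (card_roots' N).trans hND

theorem aux_fixed {F : Type*} [Field F] [Fintype F] [DecidableEq F] (Q j : ℕ) (hQ : 2 ≤ Q)
    (hF : Fintype.card F = Q ^ j) :
    (Finset.univ.filter (fun u : F => u ^ Q = u)).card ≥ Q := by
  have h := IsCyclic.card_powMonoidHom_ker (G := Fˣ) (Q - 1)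
  rw [Nat.card_eq_fintype_card (α := Fˣ), Fintype.card_units, hF,
    Nat.gcd_eq_right (by simpa using Nat.sub_dvd_pow_sub_pow Q 1 j)] at h
  have h2 : (insert (0:F) ((Finset.univ.filter
      (fun u : Fˣ => u ∈ (powMonoidHom (Q - 1) : Fˣ →* Fˣ).ker)).image (fun u : Fˣ => (u : F)))).card = Q := by
    rw [Finset.card_insert_of_notMem (by simp), Finset.card_image_of_injective _ Units.val_injective]
    have : (Finset.univ.filter
      (fun u : Fˣ => u ∈ (powMonoidHom (Q - 1) : Fˣ →* Fˣ).ker)).card = Q - 1 := by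
      rw [Nat.card_eq_fintype_card, Fintype.card_subtype] at h
      exact h
    omega
  rw [ge_iff_le]
  nth_rewrite 1 [← h2]
  apply Finset.card_le_card
  intro u hu
  simp only [Finset.mem_insert, Finset.mem_image, Finset.mem_filter, Finset.mem_univ, true_and,
    MonoidHom.mem_ker, powMonoidHom_apply] at hu ⊢
  rcases hu with rfl | ⟨v, hv, rfl⟩
  · exact zero_pow (by omega)
  · have := congrArg (fun w : Fˣ => (w : F)) hv
    simp only [Units.val_pow_eq_pow_val, Units.val_one] at this
    obtain ⟨k, rfl⟩ : ∃ k, Q = k + 1 := ⟨Q - 1, by omega⟩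
    rw [pow_succ]
    simp at this
    rw [this, one_mul]

open Polynomial in
theorem aux_roots_le {F : Type*} [Field F] [Fintype F] [DecidableEq F] (l : ℕ) (hl : 2 ≤ l) (z : F) :
    (Finset.univ.filter (fun u : F => u ^ l - u = z)).card ≤ l := by
  have hd : (X ^ l - (X + C z) : F[X]).natDegree = l := by
    rw [natDegree_sub_eq_left_of_natDegree_lt] <;> rw [natDegree_X_pow]
    rw [natDegree_X_add_C]; omega
  have h0 : (X ^ l - (X + C z) : F[X]) ≠ 0 := by
    intro h; rw [h] at hd; simp at hd; omega
  conv_rhs => rw [← hd]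
  apply card_le_degree_of_subset_roots
  intro u hu
  rw [mem_roots h0]
  simp at hu ⊢
  linear_combination hu

theorem aux_count {F : Type*} [Field F] [Fintype F] [DecidableEq F] (p k s l : ℕ) [Fact p.Prime]
    [CharP F p] (hl : l = p ^ k) (hl2 : Odd l) (hl3 : 3 ≤ l) (hs : 0 < s)
    (hF : Fintype.card F = l ^ (2 * s)) :
    ∃ c : F, c ≠ 0 ∧ l ^ s + (l ^ s - 1) * l ^ (s - 1) ≤
      (Finset.univ.filter (fun b : F => ∃ x : F, x ^ l - x = c * b ^ 2)).card := by
  have hp2 : (2 : F) ≠ 0 := by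
    have : p ≠ 2 := by
      rintro rfl
      have hk : k ≠ 0 := by rintro rfl; simp at hl; omega
      subst hl
      rw [Nat.odd_pow_iff hk] at hl2
      exact absurd hl2 (by decide)
    exact Ring.two_ne_zero (by rwa [ringChar.eq F p])
  set Q := l ^ s with hQ
  have hQp : Q = p ^ (k * s) := by rw [hQ, hl, pow_mul]
  have hQodd : Odd Q := hl2.pow
  have hQl : l ≤ Q := Nat.le_self_pow (by omega) l
  have hF2 : Fintype.card F = Q ^ 2 := by rw [hF, hQ, ← pow_mul, mul_comm]
  have hsubQ : ∀ x y : F, (x - y) ^ Q = x ^ Q - y ^ Q := by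
    intro x y; rw [hQp]; exact sub_pow_char_pow ..
  have haddQ : ∀ x y : F, (x + y) ^ Q = x ^ Q + y ^ Q := by
    intro x y; rw [hQp]; exact add_pow_char_pow ..
  have hsubl : ∀ x y : F, (x - y) ^ l = x ^ l - y ^ l := by
    intro x y; rw [hl]; exact sub_pow_char_pow ..
  have haddl : ∀ x y : F, (x + y) ^ l = x ^ l + y ^ l := by
    intro x y; rw [hl]; exact add_pow_char_pow ..
  have hQQ : ∀ x : F, (x ^ Q) ^ Q = x := by
    intro x; rw [← pow_mul, ← sq, ← hF2, FiniteField.pow_card]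
  -- the element c
  obtain ⟨x0, hx0⟩ : ∃ x : F, x ^ Q - x ≠ 0 := by
    by_contra! h
    have h1 := aux_roots_le (F := F) Q (by omega) 0
    rw [Finset.filter_true_of_mem (by intro x _; exact h x), Finset.card_univ, hF2] at h1
    nlinarith
  obtain ⟨c, hc0, hcQ⟩ : ∃ c : F, c ≠ 0 ∧ c ^ Q = -c :=
    ⟨x0 ^ Q - x0, hx0, by rw [hsubQ, hQQ]; ring⟩
  refine ⟨c, hc0, ?_⟩
  -- anti-invariant elements are in the image
  have hW : ∀ w : F, w ^ Q = -w → ∃ x : F, x ^ l - x = w := by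
    let W := {w : F // w ^ Q = -w}
    let f : W → W := fun w => ⟨w.1 ^ l - w.1, by
      rw [hsubQ, ← pow_mul, mul_comm, pow_mul, w.2, hl2.neg_pow]; ring⟩
    have hfix : ∀ n : ℕ, ∀ x : F, x ^ l = x → x ^ (l ^ n) = x := by
      intro n x hx
      induction n with
      | zero => simp
      | succ n ih => rw [pow_succ, pow_mul, ih, hx]
    have hf : Function.Injective f := by
      intro a b hab
      have h1 : a.1 ^ l - a.1 = b.1 ^ l - b.1 := congrArg Subtype.val hab
      have h2 : (a.1 - b.1) ^ l = a.1 - b.1 := by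
        rw [hsubl]; linear_combination h1
      have h3 : (a.1 - b.1) ^ Q = a.1 - b.1 := hfix s _ h2
      rw [hsubQ, a.2, b.2] at h3
      have h4 : (2 : F) * (a.1 - b.1) = 0 := by linear_combination -h3
      exact Subtype.ext (sub_eq_zero.1 ((mul_eq_zero.1 h4).resolve_left hp2))
    intro w hw
    obtain ⟨x, hx⟩ := Finite.surjective_of_injective hf ⟨w, hw⟩
    exact ⟨x.1, congrArg Subtype.val hx⟩
  set K := Finset.univ.filter (fun u : F => u ^ Q = u) with hK
  have hKc : Q ≤ K.card := aux_fixed Q 2 (by omega) hF2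
  have hmK : ∀ u, u ∈ K ↔ u ^ Q = u := by intro u; simp [hK]
  set Z := K.image (fun u => u ^ l - u) with hZ
  have hZQ : ∀ z ∈ Z, z ^ Q = z := by
    intro z hz
    obtain ⟨u, hu, rfl⟩ := Finset.mem_image.1 hz
    rw [hmK] at hu
    rw [hsubQ, ← pow_mul, mul_comm, pow_mul, hu]
  have hZc : l ^ (s - 1) ≤ Z.card := by
    have h1 : K.card ≤ l * Z.card := by
      apply Finset.card_le_mul_card_image
      intro z _
      refine le_trans (Finset.card_le_card ?_) (aux_roots_le l (by omega) z)
      intro u hu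
      simp at hu ⊢
      exact hu.2
    have h2 : l * l ^ (s - 1) = Q := by
      rw [← pow_succ', hQ]; congr 1; omega
    have : l * l ^ (s - 1) ≤ l * Z.card := by omega
    exact Nat.le_of_mul_le_mul_left this (by omega)
  set T1 := K.image (fun v => v * c)
  set T2 := ((K.erase 0) ×ˢ Z).image (fun a => a.1 + a.2 / (2 * c * a.1))
  have h2Q : (2 : F) ^ Q = 2 := by
    have := haddQ 1 1
    rw [one_pow] at this
    rwa [one_add_one_eq_two] at this
  have hT1 : T1.card = K.card := Finset.card_image_of_injective _ (mul_left_injective₀ hc0)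
  have hyQ : ∀ u z : F, u ^ Q = u → z ^ Q = z →
      (z / (2 * c * u)) ^ Q = - (z / (2 * c * u)) := by
    intro u z hu hz
    rw [div_pow, mul_pow, mul_pow, hu, hz, h2Q, hcQ, mul_neg, neg_mul, div_neg]
  have hT2 : T2.card = (K.card - 1) * Z.card := by
    have h0 : (0 : F) ∈ K := by rw [hmK]; exact zero_pow (by omega)
    rw [Finset.card_image_of_injOn, Finset.card_product, Finset.card_erase_of_mem h0]
    rintro ⟨u, z⟩ h1 ⟨u', z'⟩ h2 h
    simp only [Finset.coe_product, Set.mem_prod, Finset.mem_coe, Finset.mem_erase, hmK] at h1 h2 h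
    obtain ⟨⟨hu0, hu⟩, hz⟩ := h1
    obtain ⟨⟨hu0', hu'⟩, hz'⟩ := h2
    have e := congrArg (fun x => x ^ Q) h
    simp only [haddQ] at e
    rw [hyQ u z hu (hZQ z hz), hyQ u' z' hu' (hZQ z' hz'), hu, hu'] at e
    have e2 : (2 : F) * (u - u') = 0 := by linear_combination h + e
    have e3 : u = u' := sub_eq_zero.1 ((mul_eq_zero.1 e2).resolve_left hp2)
    subst e3
    have e4 : z / (2 * c * u) = z' / (2 * c * u) := by linear_combination h
    rw [div_left_inj' (by simp [hp2, hc0, hu0])] at e4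
    rw [e4]
  have hdis : Disjoint T1 T2 := by
    rw [Finset.disjoint_left]
    intro b h1 h2
    obtain ⟨v, hv, rfl⟩ := Finset.mem_image.1 h1
    obtain ⟨⟨u, z⟩, ha, hb⟩ := Finset.mem_image.1 h2
    simp only [Finset.mem_product, Finset.mem_erase, hmK] at ha hv hb
    obtain ⟨⟨hu0, hu⟩, hz⟩ := ha
    have e := congrArg (fun x => x ^ Q) hb
    simp only [haddQ] at e
    rw [hyQ u z hu (hZQ z hz), hu, mul_pow, hv, hcQ] at e
    have e2 : (2 : F) * u = 0 := by linear_combination hb + e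
    exact hu0 ((mul_eq_zero.1 e2).resolve_left hp2)
  have hsub : T1 ∪ T2 ⊆ Finset.univ.filter (fun b : F => ∃ x : F, x ^ l - x = c * b ^ 2) := by
    intro b hb
    rw [Finset.mem_filter]
    refine ⟨Finset.mem_univ _, ?_⟩
    rcases Finset.mem_union.1 hb with h1 | h2
    · obtain ⟨v, hv, rfl⟩ := Finset.mem_image.1 h1
      rw [hmK] at hv
      apply hW
      rw [mul_pow, ← pow_mul, mul_comm 2, pow_mul, mul_pow, hv, hcQ]
      ring
    · obtain ⟨⟨u, z⟩, ha, rfl⟩ := Finset.mem_image.1 h2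
      simp only [Finset.mem_product, Finset.mem_erase, hmK] at ha
      obtain ⟨⟨hu0, hu⟩, hz⟩ := ha
      have hy := hyQ u z hu (hZQ z hz)
      obtain ⟨x, hx⟩ := hW (c * (u ^ 2 + (z / (2 * c * u)) ^ 2)) (by
        rw [mul_pow, haddQ, pow_right_comm u, pow_right_comm (z / _), hu, hy, hcQ]
        ring)
      obtain ⟨x', _, hx'⟩ := Finset.mem_image.1 hz
      refine ⟨x + x', ?_⟩
      have e : 2 * c * u * (z / (2 * c * u)) = z := mul_div_cancel₀ z (by simp [hp2, hc0, hu0])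
      simp only at hx' ⊢
      rw [haddl]
      linear_combination hx + hx' - e
  refine le_trans ?_ (Finset.card_le_card hsub)
  rw [Finset.card_union_of_disjoint hdis, hT1, hT2]
  exact add_le_add hKc (Nat.mul_le_mul (by omega) hZc)

def expo (t r : ℕ) : Option (Fin t × Fin r) → ℕ × ℕ
  | none => (0, t)
  | some (j, i) => (i, j)

theorem expo_inj (t r : ℕ) : Function.Injective (expo t r) := by
  rintro (_ | ⟨j, i⟩) (_ | ⟨j', i'⟩) h
  · rfl
  · simp only [expo, Prod.mk.injEq] at h
    have := j'.2; omega
  · simp only [expo, Prod.mk.injEq] at h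
    have := j.2; omega
  · simp only [expo, Prod.mk.injEq] at h
    simp only [Option.some.injEq, Prod.mk.injEq]
    exact ⟨Fin.ext h.2, Fin.ext h.1⟩

theorem expo_le (t r : ℕ) (hr : 1 ≤ r) (k) : (expo t r k).1 < r ∧ (expo t r k).2 ≤ t := by
  rcases k with (_ | ⟨j, i⟩)
  · simp only [expo]; omega
  · simp only [expo]; have := i.2; have := j.2; omega

theorem expo_deg (t r l D : ℕ) (hD1 : t * l ≤ D) (hD2 : (t - 1) * l + 2 * (r - 1) ≤ D) (k) :
    2 * (expo t r k).1 + (expo t r k).2 * l ≤ D := by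
  rcases k with (_ | ⟨j, i⟩)
  · simp only [expo]; omega
  · simp only [expo]
    have := i.2
    have h : (j : ℕ) * l ≤ (t - 1) * l := Nat.mul_le_mul_right _ (by have := j.2; omega)
    omega

open Polynomial in
theorem aux_code {F : Type*} [Field F] [DecidableEq F] (l r δ t m D : ℕ) (hl : Odd l) (L : F[X])
    (hL : L.natDegree = l) (b : Fin m → F) (hb : Function.Injective b)
    (xx : Fin m → Fin l → F) (hxx : ∀ k, Function.Injective (xx k))
    (hc : ∀ k i, L.eval (xx k i) = b k ^ 2) (hr1 : 1 ≤ r) (hrl : r ≤ l) (hδ : r + δ = l + 1)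
    (ht : 1 ≤ t) (htm : t < m) (hD1 : t * l ≤ D) (hD2 : (t - 1) * l + 2 * (r - 1) ≤ D) :
    ∃ C : Submodule F (Fin (m * l) → F), Module.finrank F C = t * r + 1 ∧ IsLRC C r δ ∧
      (∀ c ∈ C, c ≠ 0 → m * l ≤ hammingWt c + D) ∧
      ∃ c ∈ C, c ≠ 0 ∧ hammingWt c = (m - t) * l := by
  set e : Fin (m * l) ≃ Fin m × Fin l := finProdFinEquiv.symm with he
  set x : Fin (m * l) → F := fun n => xx (e n).1 (e n).2 with hx
  set y : Fin (m * l) → F := fun n => b (e n).1 with hy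
  have hcurve : ∀ n, y n ^ 2 = L.eval (x n) := fun n => (hc _ _).symm
  set E := Fintype.linearCombination F
    (fun k : Option (Fin t × Fin r) => fun n : Fin (m * l) =>
      x n ^ (expo t r k).1 * y n ^ (expo t r k).2) with hE
  have hEa : ∀ a n, E a n = ∑ k, a k * (x n ^ (expo t r k).1 * y n ^ (expo t r k).2) := by
    intro a n
    simp [hE, Fintype.linearCombination_apply, Finset.sum_apply]
  -- fibre polynomials
  set G : (Option (Fin t × Fin r) → F) → F → F[X] := fun a β =>
    ∑ k, C (a k * β ^ (expo t r k).2) * X ^ (expo t r k).1 with hG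
  have hGdeg : ∀ a β, (G a β).natDegree ≤ r - 1 := by
    intro a β
    apply natDegree_sum_le_of_forall_le
    intro k _
    refine (natDegree_C_mul_X_pow_le _ _).trans ?_
    have := (expo_le t r hr1 k).1
    omega
  have hGE : ∀ a n, E a n = (G a (y n)).eval (x n) := by
    intro a n
    rw [hEa, hG, eval_finsetSum]
    refine Finset.sum_congr rfl fun k _ => ?_
    rw [eval_mul, eval_C, eval_pow, eval_X]; ring
  have hinj : Function.Injective E := by
    rw [injective_iff_map_eq_zero]
    intro a ha
    have h1 : ∀ κ : Fin m, G a (b κ) = 0 := by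
      intro κ
      refine eq_zero_of_natDegree_lt_card_of_eval_eq_zero _ (hxx κ) ?_ ?_
      · intro i
        have h := congrFun ha (e.symm (κ, i))
        rw [hGE] at h
        simpa [hx, hy] using h
      · rw [Fintype.card_fin]
        have := hGdeg a (b κ)
        omega
    funext k0
    set P : F[X] := ∑ k, if (expo t r k).1 = (expo t r k0).1 then
      C (a k) * X ^ (expo t r k).2 else 0 with hP
    have hP0 : P = 0 := by
      refine eq_zero_of_natDegree_lt_card_of_eval_eq_zero _ hb ?_ ?_
      · intro κ
        have h := congrArg (fun p => coeff p (expo t r k0).1) (h1 κ)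
        simp only [hG, finsetSum_coeff, coeff_C_mul_X_pow, coeff_zero] at h
        rw [hP, eval_finsetSum, ← h]
        refine Finset.sum_congr rfl fun k _ => ?_
        by_cases hk : (expo t r k).1 = (expo t r k0).1
        · simp [hk]
        · simp [hk, Ne.symm hk]
      · rw [Fintype.card_fin]
        refine lt_of_le_of_lt ?_ htm
        apply natDegree_sum_le_of_forall_le
        intro k _
        split_ifs
        · exact (natDegree_C_mul_X_pow_le _ _).trans (expo_le t r hr1 k).2
        · simp
    have h := congrArg (fun p => coeff p (expo t r k0).2) hP0
    simp only [hP, finsetSum_coeff, coeff_zero] at h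
    rw [Finset.sum_eq_single k0] at h
    · simpa using h
    · intro k _ hk
      split_ifs with h2
      · rw [coeff_C_mul_X_pow, if_neg]
        intro h3
        exact hk (expo_inj t r (Prod.ext h2 h3.symm))
      · simp
    · simp
  refine ⟨LinearMap.range E, ?_, ?_, ?_, ?_⟩
  · rw [LinearMap.finrank_range_of_inj hinj]
    simp
  · intro n
    set R := Finset.univ.filter (fun n' => (e n').1 = (e n).1) with hR
    have hRc : R.card = l := by
      have : R = (({(e n).1} : Finset (Fin m)) ×ˢ
            (Finset.univ : Finset (Fin l))).map e.symm.toEmbedding := by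
        ext n'
        simp only [hR, Finset.mem_map_equiv, Finset.mem_filter, Finset.mem_univ, true_and,
          Equiv.symm_symm, Finset.mem_product, Finset.mem_singleton, and_true]
      rw [this, Finset.card_map, Finset.card_product, Finset.card_univ, Fintype.card_fin]
      simp
    refine ⟨R, by simp [hR], by omega, ?_⟩
    rintro c ⟨a, rfl⟩ ⟨j, hj, hj0⟩
    have hRm : ∀ n' ∈ R, (e n').1 = (e n).1 := fun n' h => (Finset.mem_filter.1 h).2
    have hRE : ∀ n' ∈ R, E a n' = (G a (b (e n).1)).eval (x n') := by
      intro n' h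
      rw [hGE, hy]
      simp only [hRm n' h]
    have hG0 : G a (b (e n).1) ≠ 0 := by
      intro h
      apply hj0
      rw [hRE j hj, h, eval_zero]
    have h1 : ((R.filter (fun j => E a j = 0)).image x).card ≤ r - 1 := by
      refine le_trans (card_le_degree_of_subset_roots (p := G a (b (e n).1)) ?_) (hGdeg a _)
      intro z hz
      rw [Finset.mem_val] at hz
      obtain ⟨n', hn', rfl⟩ := Finset.mem_image.1 hz
      rw [Finset.mem_filter] at hn'
      rw [mem_roots hG0, IsRoot, ← hRE n' hn'.1]
      exact hn'.2
    rw [Finset.card_image_of_injOn] at h1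
    · have h2 : (R.filter (fun j => E a j = 0)).card + (R.filter (fun j => E a j ≠ 0)).card = l := by
        rw [Finset.card_filter_add_card_filter_not, hRc]
      omega
    · intro n1 hn1 n2 hn2 h
      have e1 := hRm n1 (Finset.mem_filter.1 (Finset.mem_coe.1 hn1)).1
      have e2 := hRm n2 (Finset.mem_filter.1 (Finset.mem_coe.1 hn2)).1
      simp only [hx, e1, e2] at h
      exact e.injective (Prod.ext (e1.trans e2.symm) (hxx _ h))
  · rintro c ⟨a, rfl⟩ hc0
    set A : F[X] := ∑ k, if Even (expo t r k).2 then
      C (a k) * X ^ (expo t r k).1 * L ^ ((expo t r k).2 / 2) else 0 with hA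
    set B : F[X] := ∑ k, if Even (expo t r k).2 then 0 else
      C (a k) * X ^ (expo t r k).1 * L ^ ((expo t r k).2 / 2) with hB
    have hterm : ∀ k, (C (a k) * X ^ (expo t r k).1 * L ^ ((expo t r k).2 / 2)).natDegree ≤
        (expo t r k).1 + (expo t r k).2 / 2 * l := by
      intro k
      refine natDegree_mul_le.trans (add_le_add (natDegree_C_mul_X_pow_le _ _) ?_)
      rw [natDegree_pow, hL]
    have hAB : ∀ n, E a n = A.eval (x n) + y n * B.eval (x n) := by
      intro n
      rw [hEa, hA, hB, eval_finsetSum, eval_finsetSum, Finset.mul_sum, ← Finset.sum_add_distrib]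
      refine Finset.sum_congr rfl fun k _ => ?_
      have e2 := Nat.div_add_mod (expo t r k).2 2
      split_ifs with h
      · rw [Nat.even_iff.1 h] at e2
        conv_lhs => rw [← e2]
        simp [← hcurve, pow_mul, mul_assoc]
      · rw [Nat.not_even_iff.1 h] at e2
        conv_lhs => rw [← e2]
        simp only [pow_add, pow_mul, pow_one, eval_zero, eval_mul, eval_C, eval_pow, eval_X,
          ← hcurve]
        ring
    have hlD : l ≤ D := le_trans (Nat.le_mul_of_pos_left l (by omega)) hD1
    set S := Finset.univ.filter (fun n => E a n = 0) with hS
    have hSD : (S.image (fun n => (x n, y n))).card ≤ D := by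
      apply aux_zeros l D hl L A B hL
      · suffices A.natDegree ≤ D / 2 by omega
        apply natDegree_sum_le_of_forall_le
        intro k _
        split_ifs with h
        · refine (hterm k).trans ?_
          have h1 := expo_deg t r l D hD1 hD2 k
          obtain ⟨w, hw⟩ := h
          have : (expo t r k).2 / 2 = w := by omega
          rw [this]
          rw [hw, add_mul] at h1
          omega
        · simp
      · suffices B.natDegree ≤ (D - l) / 2 by omega
        apply natDegree_sum_le_of_forall_le
        intro k _
        split_ifs with h
        · simp
        · refine (hterm k).trans ?_
          have h1 := expo_deg t r l D hD1 hD2 k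
          rw [Nat.not_even_iff_odd] at h
          obtain ⟨w, hw⟩ := h
          have : (expo t r k).2 / 2 = w := by omega
          rw [this]
          rw [hw, add_mul, mul_assoc, one_mul] at h1
          omega
      · by_contra! h
        apply hc0
        funext n
        rw [hAB, h.1, h.2]; simp
      · intro p hp
        obtain ⟨n, hn, rfl⟩ := Finset.mem_image.1 hp
        refine ⟨hcurve n, ?_⟩
        rw [← hAB]
        exact (Finset.mem_filter.1 hn).2
    rw [Finset.card_image_of_injective] at hSD
    · have h : S.card + hammingWt (E a) = m * l := by
        unfold hammingWt
        rw [hS, Finset.card_filter_add_card_filter_not, Finset.card_univ, Fintype.card_fin]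
      omega
    · intro n n' h
      simp only [hx, hy, Prod.mk.injEq] at h
      have h1 := hb h.2
      have h2 := h.1
      rw [h1] at h2
      exact e.injective (Prod.ext h1 (hxx _ h2))
  · set P : F[X] := ∏ j : Fin t, (X - C (b (Fin.castLE htm.le j))) with hP
    have hPm : P.Monic := monic_prod_of_monic _ _ fun _ _ => monic_X_sub_C _
    have hPd : P.natDegree = t := by
      rw [hP, natDegree_prod_of_monic _ _ fun _ _ => monic_X_sub_C _]; simp
    have hval : ∀ n, E (fun k => if (expo t r k).1 = 0 then P.coeff (expo t r k).2 else 0) n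
        = P.eval (y n) := by
      intro n
      rw [hEa, Fintype.sum_option, eval_eq_sum_range, hPd, Finset.sum_range_succ, add_comm,
        Fintype.sum_prod_type, Finset.sum_range]
      congr 1
      · refine Finset.sum_congr rfl fun j _ => ?_
        rw [Finset.sum_eq_single (⟨0, by omega⟩ : Fin r)]
        · simp [expo]
        · intro i _ hi
          have : (i : ℕ) ≠ 0 := fun h => hi (Fin.ext h)
          simp [expo, this]
        · simp
      · simp [expo]
    have hz : ∀ n, P.eval (y n) = 0 ↔ ((e n).1 : ℕ) < t := by
      intro n
      rw [hP, eval_prod, Finset.prod_eq_zero_iff]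
      simp only [Finset.mem_univ, true_and, eval_sub, eval_X, eval_C, sub_eq_zero]
      constructor
      · rintro ⟨j, hj⟩
        have := hb hj
        rw [this]; simp
      · intro h
        exact ⟨⟨_, h⟩, rfl⟩
    have hw : hammingWt (E (fun k => if (expo t r k).1 = 0 then P.coeff (expo t r k).2 else 0))
        = (m - t) * l := by
      unfold hammingWt
      simp only [hval, ne_eq, hz, not_lt]
      have : (Finset.univ.filter (fun n => t ≤ ((e n).1 : ℕ))) =
          ((Finset.univ.filter (fun k : Fin m => t ≤ (k : ℕ))) ×ˢ
            (Finset.univ : Finset (Fin l))).map e.symm.toEmbedding := by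
        ext n
        simp [Finset.mem_map_equiv]
      rw [this, Finset.card_map, Finset.card_product, Finset.card_univ, Fintype.card_fin]
      congr 1
      have h := Finset.card_filter_add_card_filter_not (s := (Finset.univ : Finset (Fin m)))
        (fun n => (n : ℕ) < t)
      rw [Fin.card_filter_val_lt] at h
      simp only [not_lt, Finset.card_univ, Fintype.card_fin] at h
      omega
    refine ⟨_, ⟨_, rfl⟩, ?_, hw⟩
    intro h
    rw [h] at hw
    have : 0 < (m - t) * l := Nat.mul_pos (by omega) (by omega)
    rw [← hw] at this
    simp [hammingWt] at this

/-- For `g ≥ 2` with `2g+1` a prime power, `q = (2g+1)^(2s)`, an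
integer `g'` with `-(g-1) ≤ g' ≤ g-1`, `r = g+1-g'`, `δ = g+1+g'`, and all
`1 ≤ t < m ≤ ⌊(q + 2g(2g+1)^s)/(2g+1)⌋`, there exists an `(r, δ)`-LRC over `F_q`
of length `m(2g+1)`, dimension `tr+1`, and minimum distance at least
`(m-t)(2g+1) + min{0, 2g'+1}`; and if moreover `0 ≤ g'`, there exists an optimal
`(r, δ)`-LRC with parameters `[m(2g+1), tr+1, (m-t)(2g+1)]_q`. -/
theorem stmt_9 (g : ℕ) (hg : 2 ≤ g) (hpp : IsPrimePow (2 * g + 1))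
    (s : ℕ) (hs : 0 < s) (q : ℕ) (hq : q = (2 * g + 1) ^ (2 * s))
    (g' : ℤ) (hg'1 : -((g : ℤ) - 1) ≤ g') (hg'2 : g' ≤ (g : ℤ) - 1)
    (r δ : ℕ) (hr : (r : ℤ) = (g : ℤ) + 1 - g') (hδ : (δ : ℤ) = (g : ℤ) + 1 + g')
    (t m : ℕ) (ht : 1 ≤ t) (htm : t < m)
    (hm : m ≤ (q + 2 * g * (2 * g + 1) ^ s) / (2 * g + 1))
    (F : Type*) [Field F] [Fintype F] [DecidableEq F] (hF : Fintype.card F = q) :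
    (∃ C : Submodule F (Fin (m * (2 * g + 1)) → F),
      Module.finrank F C = t * r + 1 ∧ IsLRC C r δ ∧
      ∀ c ∈ C, c ≠ 0 →
        ((m - t : ℕ) : ℤ) * (2 * (g : ℤ) + 1) + min 0 (2 * g' + 1) ≤ (hammingWt c : ℤ)) ∧
    (0 ≤ g' →
      ExistsOptimalLRC F (m * (2 * g + 1)) (t * r + 1) ((m - t) * (2 * g + 1)) r δ) := by
  obtain ⟨l, hl⟩ : ∃ l, l = 2 * g + 1 := ⟨_, rfl⟩
  have hlodd : Odd l := ⟨g, hl⟩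
  have hg2 : 2 * g = l - 1 := by omega
  rw [← hl] at hpp hq hm ⊢
  obtain ⟨p, k, hp, hk, hpk⟩ := (isPrimePow_nat_iff l).1 hpp
  have : Fact p.Prime := ⟨hp⟩
  subst hq
  have : CharP F p := charP_of_card_eq_prime_pow (f := k * (2 * s)) (by
    rw [Fintype.card_eq_nat_card] at *
    rw [hF, ← hpk, ← pow_mul])
  obtain ⟨c, hc0, hcount⟩ := aux_count (F := F) p k s l hpk.symm hlodd (by omega) hs hF
  have hm2 : m ≤ (Finset.univ.filter (fun b : F => ∃ x : F, x ^ l - x = c * b ^ 2)).card := by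
    refine le_trans hm (le_trans (le_of_eq ?_) hcount)
    obtain ⟨s', rfl⟩ : ∃ s', s = s' + 1 := ⟨s - 1, by omega⟩
    apply Nat.div_eq_of_eq_mul_right (by omega)
    have h1 : 1 ≤ l ^ (s' + 1) := Nat.one_le_pow _ _ (by omega)
    rw [hg2, Nat.add_sub_cancel]
    zify [h1, (by omega : 1 ≤ l)]
    ring
  obtain ⟨T, hT, hTc⟩ := Finset.exists_subset_card_eq hm2
  let eT : Fin m ≃ T := (T.equivFinOfCardEq hTc).symm
  have haddl : ∀ u v : F, (u + v) ^ l = u ^ l + v ^ l := by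
    intro u v
    rw [← hpk]; exact add_pow_char_pow ..
  have hroots : ∀ β ∈ T, ∃ f : Fin l → F, Function.Injective f ∧
      ∀ i, f i ^ l - f i = c * β ^ 2 := by
    intro β hβ
    obtain ⟨x, hx⟩ := (Finset.mem_filter.1 (hT hβ)).2
    have hfix := aux_fixed (F := F) l (2 * s) (by omega) hF
    obtain ⟨V, hV, hVc⟩ := Finset.exists_subset_card_eq hfix
    let eV : Fin l ≃ V := (V.equivFinOfCardEq hVc).symm
    refine ⟨fun i => x + (eV i : F), ?_, ?_⟩
    · intro i j h
      exact eV.injective (Subtype.ext (add_left_cancel h))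
    · intro i
      have h1 : (eV i : F) ^ l = eV i := (Finset.mem_filter.1 (hV (eV i).2)).2
      have h2 := haddl x (eV i : F)
      simp only
      rw [h2, h1, ← hx]; ring
  choose f hf1 hf2 using hroots
  have hLdeg : (Polynomial.C c⁻¹ * (Polynomial.X ^ l - Polynomial.X) : Polynomial F).natDegree = l := by
    rw [Polynomial.natDegree_C_mul (inv_ne_zero hc0),
      Polynomial.natDegree_sub_eq_left_of_natDegree_lt] <;> rw [Polynomial.natDegree_X_pow]
    rw [Polynomial.natDegree_X]; omega
  obtain ⟨D, hD⟩ : ∃ D : ℕ, (D : ℤ) = t * l - min 0 (2 * g' + 1) :=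
    ⟨((t * l : ℤ) - min 0 (2 * g' + 1)).toNat, Int.toNat_of_nonneg (by
      have : (0 : ℤ) ≤ t * l := by positivity
      omega)⟩
  have hD1 : t * l ≤ D := by
    zify
    have := min_le_left 0 (2 * g' + 1)
    omega
  have hD2 : (t - 1) * l + 2 * (r - 1) ≤ D := by
    have h2 := min_le_right 0 (2 * g' + 1)
    obtain ⟨t', rfl⟩ : ∃ t', t = t' + 1 := ⟨t - 1, by omega⟩
    push_cast at hD
    rw [add_mul, one_mul] at hD
    rw [Nat.add_sub_cancel]
    zify [(by omega : 1 ≤ r)]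
    omega
  obtain ⟨C, hC1, hC2, hC3, w, hwC, hw0, hww⟩ := aux_code (F := F) l r δ t m D hlodd _ hLdeg
    (fun i => (eT i : F)) (fun i j h => eT.injective (Subtype.ext h))
    (fun i => f (eT i) (eT i).2) (fun i => hf1 _ _)
    (fun i j => by
      simp only [Polynomial.eval_mul, Polynomial.eval_C, Polynomial.eval_sub, Polynomial.eval_pow,
        Polynomial.eval_X]
      rw [hf2, inv_mul_cancel_left₀ hc0])
    (by omega) (by omega) (by omega) ht htm hD1 hD2
  have hmt : ((m - t : ℕ) : ℤ) * l = m * l - t * l := by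
    rw [Nat.cast_sub htm.le]; ring
  have hlz : (2 * (g : ℤ) + 1) = l := by omega
  refine ⟨⟨C, hC1, hC2, ?_⟩, ?_⟩
  · intro v hv hv0
    have h := hC3 v hv hv0
    zify at h
    rw [hlz, hmt]
    omega
  · intro hg0
    refine ⟨C, hC1, ⟨?_, w, hwC, hw0, hww⟩, hC2, ?_⟩
    · intro v hv hv0
      have h := hC3 v hv hv0
      rw [min_eq_left (by omega)] at hD
      zify at h ⊢
      rw [hmt]
      omega
    · unfold SingletonOptimal
      have h1 : (t * r + 1 + r - 1) / r = t + 1 := by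
        rw [show t * r + 1 + r - 1 = (t + 1) * r by rw [add_mul]; omega]
        exact Nat.mul_div_cancel _ (by omega)
      rw [h1]
      push_cast
      rw [hmt]
      have h2 : (l : ℤ) = r + δ - 1 := by omega
      rw [h2]
      ring
end
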